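/- Let Γ ⊆ ℕ = {1,2,3,...} be a set satisfying Σ_{γ∈Γ} 1/√γ < ∞. Then for every weight w satisfying condition (A), the system of exponentials E(ℕ∖Γ) = {e^{2πint} : n ∈ ℕ∖Γ} spans the weighted space L²(𝕋, w), i.e. finite linear combinations of these exponentials are dense in L²([0,1], w(t)dt). -/

import Mathlib

open MeasureTheory

noncomputable section

/-- The weighted measure `w(t) dt` on `(0,1)`. -/
def wMeasure (w : ℝ → ℝ) : Measure ℝ :=
  (volume.restrict (Set.Ioo (0:ℝ) 1)).withDensity (fun t => ENNReal.ofReal (w t))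

/-- The exponential `e^{2πiλt}`. -/
def expf (l : ℝ) : ℝ → ℂ := fun t => Complex.exp (2 * Real.pi * Complex.I * l * t)

/-- Finite linear combinations of the exponentials `e^{2πiλt}`, `λ ∈ S`, are dense in
`L²([0,1], w(t)dt)`. -/
def ExpSpans (w : ℝ → ℝ) (S : Set ℝ) : Prop :=
  closure ((Submodule.span ℂ
      {g : Lp ℂ 2 (wMeasure w) | ∃ l ∈ S, (g : ℝ → ℂ) =ᵐ[wMeasure w] expf l} :
        Submodule ℂ (Lp ℂ 2 (wMeasure w))) : Set (Lp ℂ 2 (wMeasure w))) = Set.univ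

/-- `∫₀¹ log w(t) dt = -∞`: the positive part is finite and the negative part is infinite. -/
def LogIntNegInf (w : ℝ → ℝ) : Prop :=
  (∫⁻ t in Set.Ioo (0:ℝ) 1, ENNReal.ofReal (Real.log (w t))) ≠ ⊤ ∧
  (∫⁻ t in Set.Ioo (0:ℝ) 1, ENNReal.ofReal (-(Real.log (w t)))) = ⊤

/-- Condition (A): `w` is positive, increasing and bounded on `(0,1)`
and `∫₀¹ log w(t) dt = -∞`. -/
def ConditionA (w : ℝ → ℝ) : Prop :=
  (∀ t ∈ Set.Ioo (0:ℝ) 1, 0 < w t) ∧ MonotoneOn w (Set.Ioo (0:ℝ) 1) ∧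
  BddAbove (w '' Set.Ioo (0:ℝ) 1) ∧ LogIntNegInf w

open Filter Set Topology
open Complex (I)
open scoped Real

/-!
If `f` is orthogonal in `L²(w)` to the exponentials with frequencies in `ℕ ∖ Γ`, then the
Fourier–Laplace transform `F z = ∫ g t * e ^ (2πitz) dt` of `g = conj f * w` is entire and vanishes
on `ℕ ∖ Γ`. Since `∑ 1/√γ < ∞`, the points `√γ` are the zeros of a Blaschke product of the right
half-plane, and composing it with `√z` gives a bounded function `M` on the plane slit along
`(-∞, 0]` that vanishes on `Γ`. Hence `φ z = F z * M z / ((e ^ (2πiz) - 1) * z ^ 3)` is holomorphic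
in the slit plane.

The Fourier transform of `φ` along `Im z = 1` vanishes for `t ≤ 0`, on pushing the line up. For
`t ≥ 0` the line can be bent around the slit, so this half of the transform extends holomorphically
to the strip `0 < Im τ < π`. On the other hand, as `∫ log w` diverges, there are tents of infinite
total area such that `√w ≤ K e ^ (-ℓ)` whenever `ℓ` is a finite sum of lines carrying their falling
edges; pushing the line of integration up to a height given by the slope of `ℓ` shows that the
transform is also `O(e ^ (2πt - ℓ t))`. A Phragmén–Lindelöf argument, with the tents replaced by
holomorphic minorants, forces it to vanish in the strip. So `φ`, and with it `F`, vanishes on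
`Im z = 1`, whence `f = 0`.
-/

/-! ### Tents and their holomorphic minorants -/

/-- A holomorphic minorant of the tent `t ↦ max 0 (1 - t)`: a bounded function on the upper half
plane whose real part lies below `1 - t` on `[0, 1]` and below `0` elsewhere on `ℝ`. The
coefficients are chosen so that the real part is a positive multiple of `t (1 - t)` on `ℝ`. -/
def tentMinorant (q : ℂ) : ℂ :=
  (3 * (I / (4 * q - 2 + I)) - 5 * (1 / (4 * q - 2 + I) ^ 2)) / 32

lemma one_le_norm_four_mul_sub_two_add_I {q : ℂ} (hq : 0 ≤ q.im) : 1 ≤ ‖4 * q - 2 + I‖ := by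
  calc (1 : ℝ) ≤ (4 * q - 2 + I).im := by simp [hq]
    _ ≤ ‖4 * q - 2 + I‖ := Complex.im_le_norm _

lemma differentiableAt_tentMinorant {q : ℂ} (hq : 0 ≤ q.im) :
    DifferentiableAt ℂ tentMinorant q := by
  have hne : 4 * q - 2 + I ≠ 0 :=
    norm_pos_iff.1 (zero_lt_one.trans_le (one_le_norm_four_mul_sub_two_add_I hq))
  unfold tentMinorant
  fun_prop (disch := simp [hne])

lemma norm_tentMinorant_le_one {q : ℂ} (hq : 0 ≤ q.im) : ‖tentMinorant q‖ ≤ 1 := by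
  have hv := one_le_norm_four_mul_sub_two_add_I hq
  have h₁ : ‖I / (4 * q - 2 + I)‖ ≤ 1 := by
    rw [norm_div, Complex.norm_I]
    exact div_le_one_of_le₀ hv (norm_nonneg _)
  have h₂ : ‖1 / (4 * q - 2 + I) ^ 2‖ ≤ 1 := by
    rw [norm_div, norm_one, norm_pow]
    exact div_le_one_of_le₀ (one_le_pow₀ hv) (by positivity)
  rw [tentMinorant, norm_div, Complex.norm_ofNat, div_le_one (by norm_num)]
  calc _ ≤ ‖3 * (I / (4 * q - 2 + I))‖ + ‖5 * (1 / (4 * q - 2 + I) ^ 2)‖ := norm_sub_le _ _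
    _ ≤ 3 * 1 + 5 * 1 := by
        rw [norm_mul, norm_mul, Complex.norm_ofNat, Complex.norm_ofNat]
        gcongr
    _ ≤ 32 := by norm_num

lemma re_tentMinorant_ofReal (t : ℝ) :
    (tentMinorant t).re = t * (1 - t) / ((4 * t - 2) ^ 2 + 1) ^ 2 := by
  have hv : 4 * (t : ℂ) - 2 + I = ⟨4 * t - 2, 1⟩ := by apply Complex.ext <;> simp
  have hx : (4 * t - 2) ^ 2 + 1 ≠ 0 := by positivity
  rw [tentMinorant, hv, Complex.div_ofNat_re]
  simp only [pow_two, one_div, mul_inv_rev, Complex.sub_re, Complex.mul_re, Complex.re_ofNat,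
    Complex.div_re, Complex.I_re, zero_mul, Complex.normSq_mk, mul_one, zero_div, Complex.I_im,
    zero_add, Complex.im_ofNat, sub_zero, Complex.inv_re, Complex.inv_im, Complex.mul_im]
  field_simp
  ring

lemma re_tentMinorant_ofReal_nonpos {t : ℝ} (ht : t ≤ 0) : (tentMinorant t).re ≤ 0 := by
  rw [re_tentMinorant_ofReal]
  exact div_nonpos_of_nonpos_of_nonneg
    (mul_nonpos_of_nonpos_of_nonneg ht (by linarith)) (by positivity)

lemma re_tentMinorant_ofReal_le_tent (t : ℝ) : (tentMinorant t).re ≤ max 0 (1 - t) := by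
  rw [re_tentMinorant_ofReal]
  rcases le_total 0 (t * (1 - t)) with h | h
  · refine le_max_of_le_right ((div_le_self h ?_).trans ?_)
    · exact one_le_pow₀ (le_add_of_nonneg_left (sq_nonneg _))
    · nlinarith [sq_nonneg (1 - t)]
  · exact le_max_of_le_left (div_nonpos_of_nonpos_of_nonneg h (by positivity))

lemma le_re_tentMinorant (q : ℂ) :
    (6 * q.im - 1) / (16 * ‖4 * q - 2 + I‖ ^ 2) ≤ (tentMinorant q).re := by
  set v := 4 * q - 2 + I with hv
  have h₁ : (I / v).re = (4 * q.im + 1) / ‖v‖ ^ 2 := by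
    simp [Complex.div_re, ← Complex.normSq_eq_norm_sq, hv]
  have h₂ : (1 / v ^ 2).re ≤ 1 / ‖v‖ ^ 2 := by
    rw [← norm_pow, ← norm_one (α := ℂ), ← norm_div]
    exact Complex.re_le_norm _
  have h₃ : (tentMinorant q).re = (3 * (I / v).re - 5 * (1 / v ^ 2).re) / 32 := by
    simp only [tentMinorant, ← hv, Complex.div_ofNat_re, Complex.sub_re, Complex.mul_re,
      Complex.re_ofNat, Complex.im_ofNat, zero_mul, sub_zero]
  rw [h₃, h₁]
  calc (6 * q.im - 1) / (16 * ‖v‖ ^ 2)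
      = (3 * ((4 * q.im + 1) / ‖v‖ ^ 2) - 5 * (1 / ‖v‖ ^ 2)) / 32 := by ring
    _ ≤ _ := by gcongr

lemma le_re_tentMinorant_div {q : ℂ} (hq : 1 ≤ q.im) {p : ℝ} (hp : 0 < p) (hp₁ : p ≤ 1) :
    p / (64 * (‖q‖ + 1) ^ 2) ≤ (tentMinorant (q / p)).re := by
  have him : 1 / p ≤ (q / p).im := by
    rw [Complex.div_ofReal_im]
    gcongr
  have hone : 1 ≤ 1 / p := one_le_one_div hp hp₁
  have hv : ‖4 * (q / p) - 2 + I‖ ≤ 4 * (‖q‖ + 1) / p := by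
    calc ‖4 * (q / p) - 2 + I‖ ≤ ‖4 * (q / p)‖ + ‖(2 : ℂ)‖ + ‖I‖ :=
          (norm_add_le _ _).trans (by gcongr; exact norm_sub_le _ _)
      _ = 4 * ‖q‖ / p + 3 * 1 := by
          simp only [norm_mul, Complex.norm_ofNat, norm_div, Complex.norm_real, Real.norm_eq_abs,
            abs_of_pos hp, Complex.norm_I, mul_one]
          ring
      _ ≤ 4 * ‖q‖ / p + 4 * (1 / p) := by gcongr; norm_num
      _ = 4 * (‖q‖ + 1) / p := by ring
  have hvpos := one_le_norm_four_mul_sub_two_add_I ((by positivity : 0 ≤ 1 / p).trans him)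
  calc p / (64 * (‖q‖ + 1) ^ 2) = 4 * (1 / p) / (16 * (4 * (‖q‖ + 1) / p) ^ 2) := by
        field_simp
        norm_num
    _ ≤ (6 * (q / p).im - 1) / (16 * ‖4 * (q / p) - 2 + I‖ ^ 2) := by
        gcongr
        · linarith
        · linarith
    _ ≤ _ := le_re_tentMinorant _

/-- A sequence of tents `height k * max 0 (1 - t / width k)` with base in `[0, 1]` whose total area
(up to the factor `1/2`) is infinite. -/
structure TentFamily where
  height : ℕ → ℝ
  width : ℕ → ℝ
  height_nonneg : ∀ k, 0 ≤ height k
  width_pos : ∀ k, 0 < width k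
  width_le_one : ∀ k, width k ≤ 1
  not_summable_area : ¬ Summable fun k => height k * width k

namespace TentFamily

variable (T : TentFamily)

/-- The sum of the lines carrying the falling edges of the tents in `A`. On `[0, ∞)` the sum of all
the tents is the supremum of these over `A`. -/
def line (A : Finset ℕ) (t : ℝ) : ℝ := ∑ k ∈ A, T.height k * (1 - t / T.width k)

/-- The value of `T.line A` at `0`. -/
def intercept (A : Finset ℕ) : ℝ := ∑ k ∈ A, T.height k

/-- The rate of decrease of `T.line A`. -/
def slope (A : Finset ℕ) : ℝ := ∑ k ∈ A, T.height k / T.width k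

/-- Holomorphic minorant of the sum of the first `N` tents. -/
def minorant (N : ℕ) (q : ℂ) : ℂ :=
  ∑ k ∈ Finset.range N, T.height k * tentMinorant (q / T.width k)

lemma line_eq (A : Finset ℕ) (t : ℝ) : T.line A t = T.intercept A - T.slope A * t := by
  rw [line, intercept, slope, Finset.sum_mul, ← Finset.sum_sub_distrib]
  exact Finset.sum_congr rfl fun k _ => by ring

lemma slope_nonneg (A : Finset ℕ) : 0 ≤ T.slope A :=
  Finset.sum_nonneg fun k _ => div_nonneg (T.height_nonneg k) (T.width_pos k).le

lemma im_div_width_nonneg {q : ℂ} (hq : 0 ≤ q.im) (k : ℕ) : 0 ≤ (q / T.width k).im := by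
  rw [Complex.div_ofReal_im]
  exact div_nonneg hq (T.width_pos k).le

lemma differentiableAt_minorant (N : ℕ) {q : ℂ} (hq : 0 ≤ q.im) :
    DifferentiableAt ℂ (T.minorant N) q :=
  DifferentiableAt.fun_sum fun k _ =>
    (DifferentiableAt.comp q (differentiableAt_tentMinorant (T.im_div_width_nonneg hq k))
      (differentiableAt_id.div_const _)).const_mul _

lemma norm_minorant_le (N : ℕ) {q : ℂ} (hq : 0 ≤ q.im) :
    ‖T.minorant N q‖ ≤ T.intercept (Finset.range N) := by
  refine norm_sum_le_of_le _ fun k _ => ?_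
  rw [norm_mul, Complex.norm_of_nonneg (T.height_nonneg k)]
  exact mul_le_of_le_one_right (T.height_nonneg k)
    (norm_tentMinorant_le_one (T.im_div_width_nonneg hq k))

lemma re_minorant (N : ℕ) (q : ℂ) :
    (T.minorant N q).re =
      ∑ k ∈ Finset.range N, T.height k * (tentMinorant (q / T.width k)).re := by
  simp [minorant]

lemma re_minorant_ofReal_nonpos (N : ℕ) {t : ℝ} (ht : t ≤ 0) : (T.minorant N t).re ≤ 0 := by
  rw [re_minorant]
  refine Finset.sum_nonpos fun k _ => mul_nonpos_of_nonneg_of_nonpos (T.height_nonneg k) ?_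
  rw [← Complex.ofReal_div]
  exact re_tentMinorant_ofReal_nonpos (div_nonpos_of_nonpos_of_nonneg ht (T.width_pos k).le)

lemma exists_re_minorant_ofReal_le_line (N : ℕ) {t s : ℝ} (hts : t ≤ s) :
    ∃ A, (T.minorant N s).re ≤ T.line A t := by
  refine ⟨{k ∈ Finset.range N | 0 ≤ 1 - t / T.width k}, ?_⟩
  rw [re_minorant, line, Finset.sum_filter]
  refine Finset.sum_le_sum fun k _ => ?_
  have hle : (tentMinorant (s / T.width k)).re ≤ max 0 (1 - t / T.width k) := by
    rw [← Complex.ofReal_div]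
    refine (re_tentMinorant_ofReal_le_tent _).trans ?_
    have := T.width_pos k
    gcongr
  have hmul := mul_le_mul_of_nonneg_left hle (T.height_nonneg k)
  split_ifs with hk
  · rwa [max_eq_right hk] at hmul
  · rwa [max_eq_left (not_le.1 hk).le, mul_zero] at hmul

lemma le_re_minorant (N : ℕ) {q : ℂ} (hq : 1 ≤ q.im) :
    (∑ k ∈ Finset.range N, T.height k * T.width k) / (64 * (‖q‖ + 1) ^ 2) ≤
      (T.minorant N q).re := by
  rw [re_minorant, Finset.sum_div]
  refine Finset.sum_le_sum fun k _ => ?_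
  rw [mul_div_assoc]
  exact mul_le_mul_of_nonneg_left
    (le_re_tentMinorant_div hq (T.width_pos k) (T.width_le_one k)) (T.height_nonneg k)

lemma tendsto_area : Tendsto (fun N => ∑ k ∈ Finset.range N, T.height k * T.width k)
    atTop atTop :=
  (not_summable_iff_tendsto_nat_atTop_of_nonneg fun k =>
    mul_nonneg (T.height_nonneg k) (T.width_pos k).le).1 T.not_summable_area

lemma tendsto_re_minorant {q : ℂ} (hq : 1 ≤ q.im) :
    Tendsto (fun N => (T.minorant N q).re) atTop atTop :=
  tendsto_atTop_mono (fun N => T.le_re_minorant N hq)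
    (T.tendsto_area.atTop_div_const (by positivity))

end TentFamily

/-! ### A uniqueness theorem in a strip -/

/-- The horizontal strip `0 < Im τ < π`. -/
def strip : Set ℂ := Complex.im ⁻¹' Ioo 0 π

lemma isOpen_strip : IsOpen strip := isOpen_Ioo.preimage Complex.continuous_im

lemma isPreconnected_strip : IsPreconnected strip :=
  ((convex_Ioo 0 π).linear_preimage Complex.imLm).isPreconnected

lemma closure_strip : closure strip = Complex.im ⁻¹' Icc 0 π := by
  rw [strip, Complex.closure_preimage_im, closure_Ioo Real.pi_pos.ne]

lemma ofReal_mem_closure_strip (t : ℝ) : (t : ℂ) ∈ closure strip := by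
  rw [closure_strip]
  exact ⟨(Complex.ofReal_im t).ge, (Complex.ofReal_im t).trans_le Real.pi_pos.le⟩

lemma im_exp_sub_one_nonneg {τ : ℂ} (hτ : τ ∈ closure strip) : 0 ≤ (Complex.exp τ - 1).im := by
  rw [closure_strip] at hτ
  rw [Complex.sub_im, Complex.one_im, sub_zero, Complex.exp_im]
  exact mul_nonneg (Real.exp_pos _).le (Real.sin_nonneg_of_nonneg_of_le_pi hτ.1 hτ.2)

lemma exists_mem_strip_one_lt_im_exp_sub_one : ∃ τ ∈ strip, 1 < (Complex.exp τ - 1).im := by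
  refine ⟨1 + (π / 2 : ℝ) * I, ?_, ?_⟩
  · simp [strip, Real.pi_pos]
  · rw [Complex.sub_im, Complex.exp_im]
    simp [Real.exp_one_gt_two.trans' one_lt_two]

namespace TentFamily

variable (T : TentFamily)

/-- Multiplier for the Phragmén–Lindelöf argument in the strip: `exp τ - 1` carries the strip into
the upper half plane, and `exp (-τ ^ 2)` absorbs growth of exponential type. -/
def damping (N : ℕ) (τ : ℂ) : ℂ := Complex.exp (T.minorant N (Complex.exp τ - 1) - τ ^ 2)

/-- `G` is of exponential type in the closed strip and, on the positive half-line, dominated by the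
reciprocal exponential of the sum of the tents of `T`. -/
structure StripDecay (G : ℂ → ℂ) (C c : ℝ) : Prop where
  diffContOnCl : DiffContOnCl ℂ G strip
  norm_le : ∀ τ ∈ closure strip, ‖G τ‖ ≤ C * Real.exp (c * |τ.re|)
  norm_ofReal_le : ∀ t : ℝ, 0 < t → ∀ A, ‖G t‖ ≤ C * Real.exp (c * t - T.line A t)

lemma norm_damping (N : ℕ) (τ : ℂ) : ‖T.damping N τ‖ =
    Real.exp ((T.minorant N (Complex.exp τ - 1)).re - (τ.re ^ 2 - τ.im ^ 2)) := by
  simp only [damping, Complex.norm_exp, Complex.sub_re, pow_two, Complex.mul_re]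

lemma differentiableAt_damping (N : ℕ) {τ : ℂ} (hτ : τ ∈ closure strip) :
    DifferentiableAt ℂ (T.damping N) τ :=
  DifferentiableAt.cexp <| DifferentiableAt.fun_sub
    (DifferentiableAt.comp (g := T.minorant N) τ
      (T.differentiableAt_minorant N (im_exp_sub_one_nonneg hτ)) (by fun_prop)) (by fun_prop)

lemma norm_mul_damping_le (N : ℕ) {τ g : ℂ} {C c d K : ℝ} (hC : 0 ≤ C) (hτ : τ ∈ closure strip)
    (hg : ‖g‖ ≤ C * Real.exp (c * |τ.re| - d))
    (hK : (T.minorant N (Complex.exp τ - 1)).re ≤ d + K) :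
    ‖g * T.damping N τ‖ ≤ C * Real.exp (c ^ 2 + π ^ 2 + K) := by
  rw [closure_strip] at hτ
  have him : τ.im ^ 2 ≤ π ^ 2 := pow_le_pow_left₀ hτ.1 hτ.2 2
  have hre : c * |τ.re| - τ.re ^ 2 ≤ c ^ 2 := by
    nlinarith [sq_nonneg (|τ.re| - c / 2), sq_abs τ.re, sq_nonneg c]
  rw [norm_mul, norm_damping]
  calc _ ≤ C * Real.exp (c * |τ.re| - d) * Real.exp (d + K - (τ.re ^ 2 - π ^ 2)) := by
        gcongr
    _ = C * Real.exp (c * |τ.re| - τ.re ^ 2 + π ^ 2 + K) := by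
        rw [mul_assoc, ← Real.exp_add]
        ring_nf
    _ ≤ _ := by gcongr

namespace StripDecay

variable {T} {G : ℂ → ℂ} {C c : ℝ}

lemma const_nonneg (h : T.StripDecay G C c) : 0 ≤ C := by
  simpa using (norm_nonneg _).trans (h.norm_le 0 (mod_cast ofReal_mem_closure_strip 0))

lemma norm_mul_damping_le_of_re_minorant_le (h : T.StripDecay G C c) (N : ℕ) {τ : ℂ} {K : ℝ}
    (hτ : τ ∈ closure strip) (hK : (T.minorant N (Complex.exp τ - 1)).re ≤ K) :
    ‖G τ * T.damping N τ‖ ≤ C * Real.exp (c ^ 2 + π ^ 2 + K) :=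
  T.norm_mul_damping_le N h.const_nonneg hτ (d := 0) (by simpa using h.norm_le τ hτ) (by simpa)

lemma norm_mul_damping_ofReal_le (h : T.StripDecay G C c) (N : ℕ) (t : ℝ) :
    ‖G t * T.damping N t‖ ≤ C * Real.exp (c ^ 2 + π ^ 2 + 0) := by
  have hexp : Complex.exp t - 1 = (Real.exp t - 1 : ℝ) := by push_cast; rfl
  rcases le_or_gt t 0 with ht | ht
  · refine h.norm_mul_damping_le_of_re_minorant_le N (ofReal_mem_closure_strip t) ?_
    rw [hexp]
    exact T.re_minorant_ofReal_nonpos N (sub_nonpos.2 (Real.exp_le_one_iff.2 ht))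
  · obtain ⟨A, hA⟩ := T.exists_re_minorant_ofReal_le_line N
      (le_sub_iff_add_le.2 (Real.add_one_le_exp t))
    refine T.norm_mul_damping_le N h.const_nonneg (ofReal_mem_closure_strip t)
      (d := T.line A t) ?_ ?_
    · rw [Complex.ofReal_re, abs_of_pos ht]
      exact h.norm_ofReal_le t ht A
    · rwa [hexp, add_zero]

lemma norm_mul_damping_le_of_im_eq_pi (h : T.StripDecay G C c) (N : ℕ) {τ : ℂ} (hτ : τ.im = π) :
    ‖G τ * T.damping N τ‖ ≤ C * Real.exp (c ^ 2 + π ^ 2 + 0) := by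
  have hmem : τ ∈ closure strip := by
    rw [closure_strip]
    exact ⟨hτ ▸ Real.pi_pos.le, hτ.le⟩
  have hexp : Complex.exp τ - 1 = (-Real.exp τ.re - 1 : ℝ) := by
    rw [← Complex.re_add_im τ, hτ, Complex.exp_add, Complex.exp_pi_mul_I]
    simp
  refine h.norm_mul_damping_le_of_re_minorant_le N hmem ?_
  rw [hexp]
  exact T.re_minorant_ofReal_nonpos N (by linarith [Real.exp_pos τ.re])

lemma norm_mul_damping_le (h : T.StripDecay G C c) (N : ℕ) {τ : ℂ} (hτ : τ ∈ closure strip) :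
    ‖G τ * T.damping N τ‖ ≤ C * Real.exp (c ^ 2 + π ^ 2 + 0) := by
  have hd : DiffContOnCl ℂ (fun τ => G τ * T.damping N τ) strip :=
    ⟨h.diffContOnCl.1.mul fun z hz =>
        (T.differentiableAt_damping N (subset_closure hz)).differentiableWithinAt,
      h.diffContOnCl.2.mul fun z hz =>
        (T.differentiableAt_damping N hz).continuousAt.continuousWithinAt⟩
  have hmem : τ.im ∈ Icc 0 π := by rwa [closure_strip] at hτ
  refine PhragmenLindelof.horizontal_strip (f := fun τ => G τ * T.damping N τ) hd
    ⟨0, by simp, 0, ?_⟩ ?_ (fun z hz => h.norm_mul_damping_le_of_im_eq_pi N hz) hmem.1 hmem.2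
  · refine Asymptotics.IsBigO.of_bound
      (C * Real.exp (c ^ 2 + π ^ 2 + T.intercept (Finset.range N))) ?_
    refine eventually_inf_principal.2 (Eventually.of_forall fun z hz => ?_)
    have hz' : z ∈ closure strip := subset_closure hz
    simpa using h.norm_mul_damping_le_of_re_minorant_le N hz'
      ((Complex.re_le_norm _).trans (T.norm_minorant_le N (im_exp_sub_one_nonneg hz')))
  · intro z hz
    rw [← Complex.re_add_im z, hz, Complex.ofReal_zero, zero_mul, add_zero]
    exact h.norm_mul_damping_ofReal_le N z.re

lemma eq_zero_of_one_le_im (h : T.StripDecay G C c) {τ : ℂ} (hτ : τ ∈ closure strip)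
    (him : 1 ≤ (Complex.exp τ - 1).im) : G τ = 0 := by
  have hbound (N : ℕ) : ‖G τ‖ ≤ C * Real.exp (c ^ 2 + π ^ 2 + 0) *
      Real.exp (-((T.minorant N (Complex.exp τ - 1)).re - (τ.re ^ 2 - τ.im ^ 2))) := by
    rw [Real.exp_neg, ← div_eq_mul_inv, le_div_iff₀ (Real.exp_pos _), ← norm_damping, ← norm_mul]
    exact h.norm_mul_damping_le N hτ
  have hlim : Tendsto (fun N => C * Real.exp (c ^ 2 + π ^ 2 + 0) *
      Real.exp (-((T.minorant N (Complex.exp τ - 1)).re - (τ.re ^ 2 - τ.im ^ 2))))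
      atTop (𝓝 (C * Real.exp (c ^ 2 + π ^ 2 + 0) * 0)) :=
    (Real.tendsto_exp_neg_atTop_nhds_zero.comp
      (tendsto_atTop_add_const_right _ _ (T.tendsto_re_minorant him))).const_mul _
  rw [mul_zero] at hlim
  exact norm_le_zero_iff.1 (ge_of_tendsto' hlim hbound)

theorem eqOn_zero (h : T.StripDecay G C c) : EqOn G 0 (closure strip) := by
  obtain ⟨τ₀, hτ₀, him⟩ := exists_mem_strip_one_lt_im_exp_sub_one
  have hcont : Continuous fun τ : ℂ => (Complex.exp τ - 1).im := by fun_prop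
  have hnear : G =ᶠ[𝓝 τ₀] 0 := by
    filter_upwards [hcont.continuousAt.eventually_const_lt him, isOpen_strip.mem_nhds hτ₀]
      with τ hτ hmem
    exact h.eq_zero_of_one_le_im (subset_closure hmem) hτ.le
  have hzero : EqOn G 0 strip :=
    (h.diffContOnCl.1.analyticOnNhd isOpen_strip).eqOn_zero_of_preconnected_of_eventuallyEq_zero
      isPreconnected_strip hτ₀ hnear
  exact hzero.of_subset_closure h.diffContOnCl.2 continuousOn_const subset_closure subset_rfl

end StripDecay

end TentFamily

/-! ### Parametric integrals and quotients of holomorphic functions -/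

section ParametricIntegral

variable {X : Type*} [MeasurableSpace X] {μ : Measure X} {h c : X → ℂ} {S : Set ℂ} {B : ℂ → ℝ}

lemma aestronglyMeasurable_mul_cexp (hh : AEStronglyMeasurable h μ)
    (hc : AEStronglyMeasurable c μ) (τ : ℂ) :
    AEStronglyMeasurable (fun x => h x * Complex.exp (c x * τ)) μ :=
  hh.mul (Complex.continuous_exp.comp_aestronglyMeasurable (hc.mul_const τ))

lemma ae_norm_mul_cexp_le (hB : ∀ᵐ x ∂μ, ∀ τ ∈ S, ‖Complex.exp (c x * τ)‖ ≤ B τ) :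
    ∀ᵐ x ∂μ, ∀ τ ∈ S, ‖h x * Complex.exp (c x * τ)‖ ≤ ‖h x‖ * B τ := by
  filter_upwards [hB] with x hx τ hτ
  rw [norm_mul]
  gcongr
  exact hx τ hτ

lemma norm_integral_mul_cexp_le (hh : Integrable h μ)
    (hB : ∀ᵐ x ∂μ, ∀ τ ∈ S, ‖Complex.exp (c x * τ)‖ ≤ B τ) {τ : ℂ} (hτ : τ ∈ S) :
    ‖∫ x, h x * Complex.exp (c x * τ) ∂μ‖ ≤ (∫ x, ‖h x‖ ∂μ) * B τ := by
  rw [← integral_mul_const]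
  exact norm_integral_le_of_norm_le (hh.norm.mul_const _)
    ((ae_norm_mul_cexp_le hB).mono fun x hx => hx τ hτ)

lemma integrable_mul_cexp (hh : Integrable h μ) (hc : AEStronglyMeasurable c μ)
    (hB : ∀ᵐ x ∂μ, ∀ τ ∈ S, ‖Complex.exp (c x * τ)‖ ≤ B τ) {τ : ℂ} (hτ : τ ∈ S) :
    Integrable (fun x => h x * Complex.exp (c x * τ)) μ :=
  (hh.norm.mul_const (B τ)).mono' (aestronglyMeasurable_mul_cexp hh.1 hc τ)
    ((ae_norm_mul_cexp_le hB).mono fun _ hx => hx τ hτ)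

lemma continuousOn_integral_mul_cexp (hh : Integrable h μ) (hc : AEStronglyMeasurable c μ)
    (hBc : Continuous B) (hB : ∀ᵐ x ∂μ, ∀ τ ∈ S, ‖Complex.exp (c x * τ)‖ ≤ B τ) :
    ContinuousOn (fun τ => ∫ x, h x * Complex.exp (c x * τ) ∂μ) S := by
  intro τ _
  have hnear : ∀ᶠ z in 𝓝[S] τ, B z < B τ + 1 :=
    nhdsWithin_le_nhds (hBc.continuousAt.eventually_lt_const (lt_add_one _))
  refine continuousWithinAt_of_dominated (bound := fun x => ‖h x‖ * (B τ + 1))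
    (Eventually.of_forall fun z => aestronglyMeasurable_mul_cexp hh.1 hc z) ?_
    (hh.norm.mul_const _) (Eventually.of_forall fun _ => by fun_prop)
  filter_upwards [hnear, self_mem_nhdsWithin] with z hz hzS
  filter_upwards [ae_norm_mul_cexp_le hB] with x hx
  exact (hx z hzS).trans (by gcongr)

lemma differentiableOn_integral_mul_cexp (hh : Integrable h μ)
    (hhc : Integrable (fun x => h x * c x) μ) (hc : AEStronglyMeasurable c μ) (hS : IsOpen S)
    (hBc : Continuous B) (hB : ∀ᵐ x ∂μ, ∀ τ ∈ S, ‖Complex.exp (c x * τ)‖ ≤ B τ) :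
    DifferentiableOn ℂ (fun τ => ∫ x, h x * Complex.exp (c x * τ) ∂μ) S := by
  intro τ hτ
  have hnear : S ∩ {z | B z < B τ + 1} ∈ 𝓝 τ :=
    inter_mem (hS.mem_nhds hτ) (hBc.continuousAt.eventually_lt_const (lt_add_one _))
  have hderiv (x : X) (z : ℂ) :
      HasDerivAt (fun z => h x * Complex.exp (c x * z)) (h x * c x * Complex.exp (c x * z)) z := by
    have := (((hasDerivAt_id z).const_mul (c x)).cexp).const_mul (h x)
    simpa [mul_comm, mul_left_comm, mul_assoc] using this
  refine (hasDerivAt_integral_of_dominated_loc_of_deriv_le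
    (F' := fun z x => h x * c x * Complex.exp (c x * z))
    (bound := fun x => ‖h x * c x‖ * (B τ + 1)) hnear
    (Eventually.of_forall fun z => aestronglyMeasurable_mul_cexp hh.1 hc z)
    (integrable_mul_cexp hh hc hB hτ) (aestronglyMeasurable_mul_cexp hhc.1 hc τ) ?_
    (hhc.norm.mul_const _)
    (Eventually.of_forall fun x z _ => hderiv x z)).2.differentiableAt.differentiableWithinAt
  filter_upwards [ae_norm_mul_cexp_le (h := fun x => h x * c x) hB] with x hx z hz
  exact (hx z hz.1).trans (by gcongr; exact hz.2.le)

end ParametricIntegral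

section Quotient

/-- The quotient `P / E`, extended by its limit to the simple zeros of `E` at which `P` vanishes. -/
def regularQuotient (P E : ℂ → ℂ) (z : ℂ) : ℂ :=
  if E z = 0 then deriv P z / deriv E z else P z / E z

lemma regularQuotient_eventuallyEq_dslope_div {P E : ℂ → ℂ} {a : ℂ} (hE : DifferentiableAt ℂ E a)
    (hEa : E a = 0) (hPa : P a = 0) (hE' : deriv E a ≠ 0) :
    regularQuotient P E =ᶠ[𝓝 a] fun z => dslope P a z / dslope E a z := by
  have hcont : ContinuousAt (dslope E a) a := continuousAt_dslope_same.2 hE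
  filter_upwards [hcont.eventually_ne (by rwa [dslope_same])] with z hz
  rcases eq_or_ne z a with rfl | hza
  · rw [regularQuotient, if_pos hEa, dslope_same, dslope_same]
  · have hEz := sub_smul_dslope_of_zero hEa z
    have hPz := sub_smul_dslope_of_zero hPa z
    have hsub : z - a ≠ 0 := sub_ne_zero.2 hza
    rw [regularQuotient, ← hEz, ← hPz, smul_eq_mul, smul_eq_mul, if_neg (mul_ne_zero hsub hz),
      mul_div_mul_left _ _ hsub]

lemma differentiableOn_regularQuotient {U : Set ℂ} (hU : IsOpen U) {P E : ℂ → ℂ}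
    (hP : DifferentiableOn ℂ P U) (hE : DifferentiableOn ℂ E U)
    (hPE : ∀ z ∈ U, E z = 0 → P z = 0) (hE' : ∀ z ∈ U, E z = 0 → deriv E z ≠ 0) :
    DifferentiableOn ℂ (regularQuotient P E) U := by
  intro a ha
  have hUa : U ∈ 𝓝 a := hU.mem_nhds ha
  have hEa : DifferentiableAt ℂ E a := (hE a ha).differentiableAt hUa
  refine DifferentiableAt.differentiableWithinAt ?_
  by_cases h : E a = 0
  · refine DifferentiableAt.congr_of_eventuallyEq (DifferentiableAt.div ?_ ?_ ?_)
      (regularQuotient_eventuallyEq_dslope_div hEa h (hPE a ha h) (hE' a ha h))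
    · exact ((Complex.differentiableOn_dslope hUa).2 hP).differentiableAt hUa
    · exact ((Complex.differentiableOn_dslope hUa).2 hE).differentiableAt hUa
    · rw [dslope_same]
      exact hE' a ha h
  · refine (((hP a ha).differentiableAt hUa).div hEa h).congr_of_eventuallyEq ?_
    filter_upwards [hEa.continuousAt.eventually_ne h] with z hz
    exact if_neg hz

end Quotient

/-! ### Uniqueness for the Fourier transform -/

section FourierUniqueness

open scoped FourierTransform SchwartzMap

variable {V : Type*} [NormedAddCommGroup V] [InnerProductSpace ℝ V] [FiniteDimensional ℝ V]
  [MeasurableSpace V] [BorelSpace V] {v : V → ℂ}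

lemma integral_mul_schwartzMap_eq_zero_of_fourier_eq_zero (hv : Integrable v) (h : 𝓕 v = 0)
    (s : 𝓢(V, ℂ)) : ∫ x, v x * s x = 0 := by
  have hflip : ∫ ξ, 𝓕 v ξ * (𝓕⁻ s : 𝓢(V, ℂ)) ξ = ∫ x, v x * 𝓕 ((𝓕⁻ s : 𝓢(V, ℂ)) : V → ℂ) x := by
    simpa using! VectorFourier.integral_fourierIntegral_smul_eq_flip (L := innerₗ V)
      Real.continuous_fourierChar continuous_inner hv (𝓕⁻ s : 𝓢(V, ℂ)).integrable
  rw [← SchwartzMap.fourier_coe, FourierTransform.fourier_fourierInv_eq] at hflip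
  simpa [h] using hflip.symm

theorem ae_eq_zero_of_fourier_eq_zero (hv : Integrable v) (h : 𝓕 v = 0) : v =ᵐ[volume] 0 := by
  refine ae_eq_zero_of_integral_contDiff_smul_eq_zero hv.locallyIntegrable fun u hu hcu => ?_
  have hcu' : HasCompactSupport fun x => (u x : ℂ) :=
    hcu.comp_left (g := Complex.ofReal) Complex.ofReal_zero
  calc ∫ x, u x • v x = ∫ x, v x * hcu'.toSchwartzMap (Complex.ofRealCLM.contDiff.comp hu) x :=
        integral_congr_ae (Eventually.of_forall fun x => by
          simp only [Complex.real_smul, mul_comm]; rfl)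
    _ = 0 := integral_mul_schwartzMap_eq_zero_of_fourier_eq_zero hv h _

end FourierUniqueness

/-! ### Shifting the contour of a Fourier integral -/

section Contour

lemma tendsto_intervalIntegral_of_norm_le {f : ℕ → ℝ → ℂ} {B : ℕ → ℝ} {a b : ℝ}
    (hB : Tendsto B atTop (𝓝 0)) (hf : ∀ N, ∀ y ∈ uIcc a b, ‖f N y‖ ≤ B N) :
    Tendsto (fun N => ∫ y in a..b, f N y) atTop (𝓝 0) :=
  squeeze_zero_norm (fun N => intervalIntegral.norm_integral_le_of_norm_le_const fun y hy =>
    hf N y (uIoc_subset_uIcc hy)) (by simpa using hB.mul_const |b - a|)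

lemma tendsto_natCast_add_half_atTop : Tendsto (fun N : ℕ => (N : ℝ) + 1 / 2) atTop atTop :=
  tendsto_atTop_add_const_right _ _ tendsto_natCast_atTop_atTop

/-- The integral of `f` along the horizontal line `Im z = y`. -/
def lineIntegral (f : ℂ → ℂ) (y : ℝ) : ℂ := ∫ x : ℝ, f (x + y * I)

variable {f : ℂ → ℂ} {a b y₁ y₂ : ℝ}

lemma integral_boundary_rect_eq_zero_of_differentiableOn
    (hf : DifferentiableOn ℂ f (uIcc a b ×ℂ uIcc y₁ y₂)) :
    (∫ x in a..b, f (x + y₁ * I)) - (∫ x in a..b, f (x + y₂ * I)) +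
      I * (∫ y in y₁..y₂, f (b + y * I)) - I * (∫ y in y₁..y₂, f (a + y * I)) = 0 := by
  simpa using Complex.integral_boundary_rect_eq_zero_of_differentiableOn f ⟨a, y₁⟩ ⟨b, y₂⟩ hf

theorem lineIntegral_eq_of_differentiableOn {B : ℝ → ℝ}
    (hf : DifferentiableOn ℂ f (Complex.im ⁻¹' uIcc y₁ y₂))
    (h₁ : Integrable fun x : ℝ => f (x + y₁ * I)) (h₂ : Integrable fun x : ℝ => f (x + y₂ * I))
    (hB : Tendsto B atTop (𝓝 0)) (hfB : ∀ z : ℂ, z.im ∈ uIcc y₁ y₂ → ‖f z‖ ≤ B |z.re|) :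
    lineIntegral f y₁ = lineIntegral f y₂ := by
  have hedge (x : ℕ → ℝ) (hx : ∀ N : ℕ, |x N| = N) :
      Tendsto (fun N : ℕ => I * ∫ y in y₁..y₂, f (x N + y * I)) atTop (𝓝 0) := by
    have hBN : Tendsto (fun N : ℕ => B N) atTop (𝓝 0) := hB.comp tendsto_natCast_atTop_atTop
    simpa using (tendsto_intervalIntegral_of_norm_le hBN fun N y hy => by
      simpa [hx] using hfB (x N + y * I) (by simpa using hy)).const_mul I
  have hneg : Tendsto (fun N : ℕ => -(N : ℝ)) atTop atBot :=
    tendsto_neg_atTop_atBot.comp tendsto_natCast_atTop_atTop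
  have hrect := ((intervalIntegral_tendsto_integral h₁ hneg tendsto_natCast_atTop_atTop).sub
    (intervalIntegral_tendsto_integral h₂ hneg tendsto_natCast_atTop_atTop)).add
    ((hedge (fun N => N) (by simp)).sub (hedge (fun N => -N) (by simp)))
  have hzero := tendsto_nhds_unique hrect ((tendsto_const_nhds (x := 0)).congr fun N => by
    linear_combination -integral_boundary_rect_eq_zero_of_differentiableOn (a := -N) (b := N)
      (hf.mono fun z hz => hz.2))
  simpa [lineIntegral, sub_eq_zero] using hzero

theorem integral_Ioi_sub_integral_Ioi_of_differentiableOn {x B : ℕ → ℝ}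
    (hf : DifferentiableOn ℂ f (Ici a ×ℂ uIcc y₁ y₂))
    (h₁ : IntegrableOn (fun x : ℝ => f (x + y₁ * I)) (Ioi a))
    (h₂ : IntegrableOn (fun x : ℝ => f (x + y₂ * I)) (Ioi a))
    (hx : Tendsto x atTop atTop) (hxa : ∀ N, a ≤ x N) (hB : Tendsto B atTop (𝓝 0))
    (hfB : ∀ N, ∀ y ∈ uIcc y₁ y₂, ‖f (x N + y * I)‖ ≤ B N) :
    (∫ x in Ioi a, f (x + y₁ * I)) - (∫ x in Ioi a, f (x + y₂ * I)) =
      I * ∫ y in y₁..y₂, f (a + y * I) := by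
  have hrect := ((intervalIntegral_tendsto_integral_Ioi a h₁ hx).sub
    (intervalIntegral_tendsto_integral_Ioi a h₂ hx)).add
    ((tendsto_intervalIntegral_of_norm_le hB hfB).const_mul I)
  have hlim := tendsto_nhds_unique hrect
    ((tendsto_const_nhds (x := I * ∫ y in y₁..y₂, f (a + y * I))).congr fun N => by
    linear_combination -integral_boundary_rect_eq_zero_of_differentiableOn (b := x N)
      (hf.mono fun z hz => ⟨((uIcc_of_le (hxa N)).subset hz.1).1, hz.2⟩))
  simpa using hlim

end Contour

/-- The integrand of the Fourier transform of `φ`, extended to complex `z` and complex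
frequency `τ`. -/
def fourierIntegrand (φ : ℂ → ℂ) (τ z : ℂ) : ℂ := φ z * Complex.exp (-(2 * π * I) * z * τ)

lemma norm_cexp_neg_two_pi_I_mul (z τ : ℂ) :
    ‖Complex.exp (-(2 * π * I) * z * τ)‖ = Real.exp (2 * π * (z.re * τ.im + z.im * τ.re)) := by
  rw [Complex.norm_exp]
  congr 1
  simp only [Complex.mul_re, Complex.mul_im, Complex.neg_re, Complex.neg_im, Complex.I_re,
    Complex.I_im, Complex.ofReal_re, Complex.ofReal_im, Complex.re_ofNat, Complex.im_ofNat]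
  ring

lemma norm_fourierIntegrand_ofReal (φ : ℂ → ℂ) (t : ℝ) (z : ℂ) :
    ‖fourierIntegrand φ t z‖ = ‖φ z‖ * Real.exp (2 * π * (z.im * t)) := by
  rw [fourierIntegrand, norm_mul, norm_cexp_neg_two_pi_I_mul, Complex.ofReal_im, Complex.ofReal_re,
    mul_zero, zero_add]

lemma one_add_re_sq_le_norm_sq {z : ℂ} (hz : 1 ≤ |z.im|) : 1 + z.re ^ 2 ≤ ‖z‖ ^ 2 := by
  rw [Complex.sq_norm, Complex.normSq_apply]
  nlinarith [sq_abs z.im]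

lemma abs_im_mul_one_add_sq_le_norm_pow_three {z : ℂ} (hz : 1 ≤ |z.im|) :
    |z.im| * (1 + z.re ^ 2) ≤ ‖z‖ ^ 3 := by
  calc |z.im| * (1 + z.re ^ 2) ≤ ‖z‖ * ‖z‖ ^ 2 := by
        gcongr
        · exact Complex.abs_im_le_norm z
        · exact one_add_re_sq_le_norm_sq hz
    _ = ‖z‖ ^ 3 := by ring

lemma div_norm_pow_three_le {C : ℝ} (hC : 0 ≤ C) {z : ℂ} (hz : 1 ≤ |z.im|) :
    C / ‖z‖ ^ 3 ≤ C / |z.im| * (1 + z.re ^ 2)⁻¹ := by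
  have : 0 < |z.im| := one_pos.trans_le hz
  rw [← div_eq_mul_inv, div_div]
  gcongr
  exact abs_im_mul_one_add_sq_le_norm_pow_three hz

lemma norm_lineIntegral_fourierIntegrand_le {φ : ℂ → ℂ} {C y : ℝ} (hC : 0 ≤ C) (hy : 1 ≤ |y|)
    (hφ : ∀ z : ℂ, z.im = y → ‖φ z‖ ≤ C / ‖z‖ ^ 3) (t : ℝ) :
    ‖lineIntegral (fourierIntegrand φ t) y‖ ≤ C * π / |y| * Real.exp (2 * π * (y * t)) := by
  calc ‖lineIntegral (fourierIntegrand φ t) y‖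
      ≤ ∫ x : ℝ, C / |y| * Real.exp (2 * π * (y * t)) * (1 + x ^ 2)⁻¹ := by
        refine norm_integral_le_of_norm_le (integrable_inv_one_add_sq.const_mul _)
          (Eventually.of_forall fun x => ?_)
        have him : ((x : ℂ) + y * I).im = y := by simp
        have hdiv := div_norm_pow_three_le hC (z := x + y * I) (by rwa [him])
        rw [norm_fourierIntegrand_ofReal, him]
        calc ‖φ (x + y * I)‖ * Real.exp (2 * π * (y * t))
            ≤ C / |y| * (1 + x ^ 2)⁻¹ * Real.exp (2 * π * (y * t)) := by
              gcongr
              simpa using (hφ _ him).trans hdiv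
          _ = C / |y| * Real.exp (2 * π * (y * t)) * (1 + x ^ 2)⁻¹ := by ring
    _ = C * π / |y| * Real.exp (2 * π * (y * t)) := by
        rw [integral_const_mul, integral_univ_inv_one_add_sq]
        ring

/-- The part of the plane on which `e^{2πiz} - 1` is bounded below: the two half-planes
`1 ≤ |Im z|` and vertical lines midway between consecutive natural numbers. -/
def awayFromIntegers : Set ℂ := {z | 1 ≤ |z.im| ∨ ∃ N : ℕ, z.re = N + 1 / 2}

/-- `φ` is holomorphic off the half-line `(-∞, 0]` and `O(|z|⁻³)` along the contours used to
move the line of integration in its Fourier transform. -/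
structure SlitDecay (φ : ℂ → ℂ) (C : ℝ) : Prop where
  differentiableOn : DifferentiableOn ℂ φ Complex.slitPlane
  norm_le : ∀ z ∈ awayFromIntegers, ‖φ z‖ ≤ C / ‖z‖ ^ 3

lemma add_mul_I_mem_slitPlane_of_pos {x : ℝ} (hx : 0 < x) (y : ℝ) :
    (x + y * I : ℂ) ∈ Complex.slitPlane := Or.inl (by simpa using hx)

lemma add_mul_I_mem_slitPlane_of_ne_zero (x : ℝ) {y : ℝ} (hy : y ≠ 0) :
    (x + y * I : ℂ) ∈ Complex.slitPlane := Or.inr (by simpa using hy)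

lemma ne_zero_of_one_le_abs {y : ℝ} (hy : 1 ≤ |y|) : y ≠ 0 :=
  abs_pos.1 (one_pos.trans_le hy)

namespace SlitDecay

variable {φ : ℂ → ℂ} {C : ℝ}

lemma nonneg (H : SlitDecay φ C) : 0 ≤ C := by
  simpa using (norm_nonneg _).trans (H.norm_le I (Or.inl (by simp)))

lemma norm_le_of_one_le_abs_im (H : SlitDecay φ C) {z : ℂ} (hz : 1 ≤ |z.im|) :
    ‖φ z‖ ≤ C / ‖z‖ ^ 3 := H.norm_le z (Or.inl hz)

lemma norm_le_inv_one_add_sq (H : SlitDecay φ C) {z : ℂ} (hz : 1 ≤ |z.im|) :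
    ‖φ z‖ ≤ C * (1 + z.re ^ 2)⁻¹ :=
  calc ‖φ z‖ ≤ C / |z.im| * (1 + z.re ^ 2)⁻¹ :=
        (H.norm_le_of_one_le_abs_im hz).trans (div_norm_pow_three_le H.nonneg hz)
    _ ≤ C * (1 + z.re ^ 2)⁻¹ := by
        gcongr
        exact div_le_self H.nonneg hz

lemma norm_mul_le_inv_one_add_sq (H : SlitDecay φ C) {z : ℂ} (hz : 1 ≤ |z.im|) :
    ‖φ z * z‖ ≤ C * (1 + z.re ^ 2)⁻¹ := by
  have hz0 : 0 < ‖z‖ := (one_pos.trans_le hz).trans_le (Complex.abs_im_le_norm z)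
  calc ‖φ z * z‖ ≤ C / ‖z‖ ^ 3 * ‖z‖ := by
        rw [norm_mul]
        gcongr
        exact H.norm_le_of_one_le_abs_im hz
    _ = C * (‖z‖ ^ 2)⁻¹ := by field_simp
    _ ≤ C * (1 + z.re ^ 2)⁻¹ :=
        mul_le_mul_of_nonneg_left (inv_anti₀ (by positivity) (one_add_re_sq_le_norm_sq hz)) H.nonneg

lemma continuous_horizontal (H : SlitDecay φ C) {y : ℝ} (hy : y ≠ 0) :
    Continuous fun x : ℝ => φ (x + y * I) :=
  H.differentiableOn.continuousOn.comp_continuous (by fun_prop) fun x =>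
    add_mul_I_mem_slitPlane_of_ne_zero x hy

lemma continuous_vertical (H : SlitDecay φ C) {x : ℝ} (hx : 0 < x) :
    Continuous fun y : ℝ => φ (x + y * I) :=
  H.differentiableOn.continuousOn.comp_continuous (by fun_prop)
    (add_mul_I_mem_slitPlane_of_pos hx)

lemma integrable_horizontal (H : SlitDecay φ C) {y : ℝ} (hy : 1 ≤ |y|) :
    Integrable fun x : ℝ => φ (x + y * I) :=
  (integrable_inv_one_add_sq.const_mul C).mono'
    (H.continuous_horizontal (ne_zero_of_one_le_abs hy)).aestronglyMeasurable
    (Eventually.of_forall fun x => by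
      simpa using H.norm_le_inv_one_add_sq (z := x + y * I) (by simpa using hy))

lemma integrable_horizontal_mul (H : SlitDecay φ C) {y : ℝ} (hy : 1 ≤ |y|) :
    Integrable fun x : ℝ => φ (x + y * I) * (x + y * I) :=
  (integrable_inv_one_add_sq.const_mul C).mono'
    ((H.continuous_horizontal (ne_zero_of_one_le_abs hy)).mul (by fun_prop)).aestronglyMeasurable
    (Eventually.of_forall fun x => by
      simpa using H.norm_mul_le_inv_one_add_sq (z := x + y * I) (by simpa using hy))

end SlitDecay

lemma abs_le_abs_of_mem_uIcc_mul {s v y : ℝ} (hs : 1 ≤ s) (hv : v ∈ uIcc y (s * y)) :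
    |y| ≤ |v| := by
  rcases le_total 0 y with hy | hy
  · rw [uIcc_of_le (by nlinarith)] at hv
    rw [abs_of_nonneg hy]
    exact hv.1.trans (le_abs_self v)
  · rw [uIcc_of_ge (by nlinarith)] at hv
    rw [abs_of_nonpos hy]
    exact (neg_le_neg hv.2).trans (neg_le_abs v)

namespace SlitDecay

variable {φ : ℂ → ℂ} {C y₁ y₂ y : ℝ}

lemma differentiableOn_fourierIntegrand (H : SlitDecay φ C) (τ : ℂ) :
    DifferentiableOn ℂ (fourierIntegrand φ τ) Complex.slitPlane :=
  H.differentiableOn.mul (by fun_prop)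

lemma integrable_fourierIntegrand (H : SlitDecay φ C) (t : ℝ) (hy : 1 ≤ |y|) :
    Integrable fun x : ℝ => fourierIntegrand φ t (x + y * I) :=
  ((H.integrable_horizontal hy).norm.mul_const (Real.exp (2 * π * (y * t)))).mono'
    ((H.differentiableOn_fourierIntegrand t).continuousOn.comp_continuous (by fun_prop) fun x =>
      add_mul_I_mem_slitPlane_of_ne_zero x (ne_zero_of_one_le_abs hy)).aestronglyMeasurable
    (Eventually.of_forall fun x => by simp [norm_fourierIntegrand_ofReal])

lemma lineIntegral_fourierIntegrand_eq (H : SlitDecay φ C) (t : ℝ)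
    (hy : ∀ y ∈ uIcc y₁ y₂, 1 ≤ |y|) :
    lineIntegral (fourierIntegrand φ t) y₁ = lineIntegral (fourierIntegrand φ t) y₂ := by
  obtain ⟨M, hM⟩ := isCompact_uIcc.exists_bound_of_continuousOn (s := uIcc y₁ y₂)
    (f := fun y => Real.exp (2 * π * (y * t))) (by fun_prop)
  have hB : Tendsto (fun s : ℝ => C * (1 + s ^ 2)⁻¹ * M) atTop (𝓝 0) := by
    have hsq : Tendsto (fun s : ℝ => 1 + s ^ 2) atTop atTop :=
      tendsto_atTop_add_const_left _ _ (tendsto_pow_atTop two_ne_zero)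
    simpa using (hsq.inv_tendsto_atTop.const_mul C).mul_const M
  refine lineIntegral_eq_of_differentiableOn
    ((H.differentiableOn_fourierIntegrand t).mono fun z hz =>
      Or.inr (ne_zero_of_one_le_abs (hy z.im hz)))
    (H.integrable_fourierIntegrand t (hy _ left_mem_uIcc))
    (H.integrable_fourierIntegrand t (hy _ right_mem_uIcc)) hB fun z hz => ?_
  have hexp : Real.exp (2 * π * (z.im * t)) ≤ M := (le_abs_self _).trans (hM _ hz)
  have hφ := H.norm_le_inv_one_add_sq (hy _ hz)
  rw [norm_fourierIntegrand_ofReal, sq_abs]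
  exact mul_le_mul hφ hexp (Real.exp_nonneg _) ((norm_nonneg _).trans hφ)

/- The line can be pushed off to infinity on the side where the exponential does not grow. -/
lemma lineIntegral_fourierIntegrand_eq_zero (H : SlitDecay φ C) {t : ℝ} (hy : 1 ≤ |y|)
    (hyt : y * t ≤ 0) : lineIntegral (fourierIntegrand φ t) y = 0 := by
  have hbound (n : ℕ) :
      ‖lineIntegral (fourierIntegrand φ t) y‖ ≤ C * π / ((n + 1 : ℕ) : ℝ) := by
    have hn : (1 : ℝ) ≤ ((n + 1 : ℕ) : ℝ) := by exact_mod_cast Nat.le_add_left 1 n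
    set s : ℝ := ((n + 1 : ℕ) : ℝ)
    have hsy : s ≤ |s * y| := by
      rw [abs_mul, abs_of_pos (by positivity)]
      exact le_mul_of_one_le_right (by positivity) hy
    rw [H.lineIntegral_fourierIntegrand_eq t (y₂ := s * y) fun v hv =>
      hy.trans (abs_le_abs_of_mem_uIcc_mul hn hv)]
    calc ‖lineIntegral (fourierIntegrand φ t) (s * y)‖
        ≤ C * π / |s * y| * Real.exp (2 * π * (s * y * t)) :=
          norm_lineIntegral_fourierIntegrand_le H.nonneg (hn.trans hsy)
            (fun z hz => H.norm_le_of_one_le_abs_im (hz ▸ hn.trans hsy)) t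
      _ ≤ C * π / s * 1 := by
          have hC := H.nonneg
          gcongr
          refine Real.exp_le_one_iff.2 (mul_nonpos_of_nonneg_of_nonpos (by positivity) ?_)
          rw [mul_assoc]
          exact mul_nonpos_of_nonneg_of_nonpos (by positivity) hyt
      _ = C * π / s := mul_one _
  exact norm_le_zero_iff.1 (ge_of_tendsto'
    ((tendsto_const_div_atTop_nhds_zero_nat (C * π)).comp (tendsto_add_atTop_nat 1)) hbound)

end SlitDecay

/-- The Fourier integral of `φ` along the contour that comes in from `-∞ + i`, descends through
`1/2` and returns to `-∞ - i`. On this contour `Re z ≤ 1/2`, so `τ` may be any complex number with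
`Im τ ≥ 0`. -/
def hankelTransform (φ : ℂ → ℂ) (τ : ℂ) : ℂ :=
  (∫ x : ℝ in Iic (1 / 2), fourierIntegrand φ τ (x + (1 : ℝ) * I)) -
    (∫ x : ℝ in Iic (1 / 2), fourierIntegrand φ τ (x + (-1 : ℝ) * I)) -
    I * ∫ y : ℝ in (-1)..1, fourierIntegrand φ τ ((1 / 2 : ℝ) + y * I)

/- The contour consists of the left halves of the lines `Im z = ± 1` and a vertical segment; the
right halves differ by that same segment, and the full line `Im z = -1` contributes nothing. -/
theorem SlitDecay.lineIntegral_one_eq_hankelTransform {φ : ℂ → ℂ} {C t : ℝ} (H : SlitDecay φ C)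
    (ht : 0 ≤ t) : lineIntegral (fourierIntegrand φ t) 1 = hankelTransform φ t := by
  have hup := H.integrable_fourierIntegrand t (y := 1) (by simp)
  have hdown := H.integrable_fourierIntegrand t (y := -1) (by simp)
  have hlower : lineIntegral (fourierIntegrand φ t) (-1) = 0 :=
    H.lineIntegral_fourierIntegrand_eq_zero (by simp) (by linarith)
  have hB : Tendsto (fun N : ℕ => C / ((N : ℝ) + 1 / 2) ^ 3 * Real.exp (2 * π * t)) atTop
      (𝓝 0) := by
    simpa using (((tendsto_pow_atTop three_ne_zero).comp
      tendsto_natCast_add_half_atTop).const_div_atTop C).mul_const (Real.exp (2 * π * t))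
  have hright := integral_Ioi_sub_integral_Ioi_of_differentiableOn (y₁ := -1) (y₂ := 1)
    ((H.differentiableOn_fourierIntegrand t).mono fun z hz =>
      Or.inl ((by norm_num : (0 : ℝ) < 1 / 2).trans_le hz.1))
    hdown.integrableOn hup.integrableOn tendsto_natCast_add_half_atTop (fun N => by simp) hB
    fun N y hy => by
      have hy' : y ∈ Icc (-1) (1 : ℝ) := by rwa [uIcc_of_le (by norm_num)] at hy
      have hre : ((N : ℝ) + 1 / 2) ≤ ‖(((N : ℝ) + 1 / 2 : ℝ) + y * I : ℂ)‖ := by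
        simpa using (le_abs_self _).trans (Complex.abs_re_le_norm ((N + 1 / 2 : ℝ) + y * I : ℂ))
      have hC := H.nonneg
      rw [norm_fourierIntegrand_ofReal]
      gcongr
      · exact (H.norm_le _ (Or.inr ⟨N, by simp⟩)).trans (by gcongr)
      · simpa using mul_le_of_le_one_left ht hy'.2
  have hsplit {y : ℝ} (h : Integrable fun x : ℝ => fourierIntegrand φ t (x + y * I)) :=
    intervalIntegral.integral_Iic_add_Ioi (b := (1 / 2 : ℝ)) h.integrableOn h.integrableOn
  calc lineIntegral (fourierIntegrand φ t) 1
      = (∫ x : ℝ in Iic (1 / 2), fourierIntegrand φ t (x + (1 : ℝ) * I)) +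
          ∫ x : ℝ in Ioi (1 / 2), fourierIntegrand φ t (x + (1 : ℝ) * I) := (hsplit hup).symm
    _ = hankelTransform φ t := by
      rw [lineIntegral, ← hsplit hdown] at hlower
      rw [hankelTransform]
      linear_combination hlower - hright

/-- `γ`, parametrised by `μ`, is a piece of a contour in `{Re z ≤ 1/2, |Im z| ≤ 1}` along which
`φ z` and `z φ z` are integrable. -/
structure IsLeftContour (φ : ℂ → ℂ) (μ : Measure ℝ) (γ : ℝ → ℂ) : Prop where
  continuous : Continuous γ
  integrable : Integrable (fun x => φ (γ x)) μ
  integrable_mul : Integrable (fun x => φ (γ x) * γ x) μ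
  re_le : ∀ᵐ x ∂μ, (γ x).re ≤ 1 / 2
  abs_im_le : ∀ᵐ x ∂μ, |(γ x).im| ≤ 1

namespace IsLeftContour

variable {φ : ℂ → ℂ} {μ : Measure ℝ} {γ : ℝ → ℂ}

lemma aestronglyMeasurable_frequency (h : IsLeftContour φ μ γ) :
    AEStronglyMeasurable (fun x => -(2 * π * I) * γ x) μ :=
  (h.continuous.const_mul _).aestronglyMeasurable

lemma ae_norm_cexp_le (h : IsLeftContour φ μ γ) : ∀ᵐ x ∂μ, ∀ τ ∈ closure strip,
    ‖Complex.exp (-(2 * π * I) * γ x * τ)‖ ≤ Real.exp (π ^ 2 + 2 * π * |τ.re|) := by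
  filter_upwards [h.re_le, h.abs_im_le] with x hre him τ hτ
  rw [closure_strip] at hτ
  have hreτ : (γ x).re * τ.im ≤ 1 / 2 * π :=
    (mul_le_mul_of_nonneg_right hre hτ.1).trans (mul_le_mul_of_nonneg_left hτ.2 (by norm_num))
  have himτ : (γ x).im * τ.re ≤ |τ.re| := by
    refine (le_abs_self _).trans ?_
    rw [abs_mul]
    exact mul_le_of_le_one_left (abs_nonneg _) him
  rw [norm_cexp_neg_two_pi_I_mul, Real.exp_le_exp]
  nlinarith [Real.pi_pos]

lemma diffContOnCl (h : IsLeftContour φ μ γ) :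
    DiffContOnCl ℂ (fun τ => ∫ x, fourierIntegrand φ τ (γ x) ∂μ) strip := by
  have hmul : Integrable (fun x => φ (γ x) * (-(2 * π * I) * γ x)) μ :=
    (h.integrable_mul.const_mul (-(2 * π * I))).congr (Eventually.of_forall fun x => by ring)
  have hB : Continuous fun τ : ℂ => Real.exp (π ^ 2 + 2 * π * |τ.re|) := by fun_prop
  exact ⟨differentiableOn_integral_mul_cexp h.integrable hmul h.aestronglyMeasurable_frequency
      isOpen_strip hB (h.ae_norm_cexp_le.mono fun _ hx τ hτ => hx τ (subset_closure hτ)),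
    continuousOn_integral_mul_cexp h.integrable h.aestronglyMeasurable_frequency hB
      h.ae_norm_cexp_le⟩

lemma exists_norm_integral_le (h : IsLeftContour φ μ γ) : ∃ D, ∀ τ ∈ closure strip,
    ‖∫ x, fourierIntegrand φ τ (γ x) ∂μ‖ ≤ D * Real.exp (2 * π * |τ.re|) := by
  refine ⟨(∫ x, ‖φ (γ x)‖ ∂μ) * Real.exp (π ^ 2), fun τ hτ => ?_⟩
  rw [mul_assoc, ← Real.exp_add]
  exact norm_integral_mul_cexp_le h.integrable h.ae_norm_cexp_le hτ

end IsLeftContour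

lemma hankelTransform_eq_setIntegral (φ : ℂ → ℂ) (τ : ℂ) : hankelTransform φ τ =
    (∫ x : ℝ in Iic (1 / 2), fourierIntegrand φ τ (x + (1 : ℝ) * I)) -
      (∫ x : ℝ in Iic (1 / 2), fourierIntegrand φ τ (x + (-1 : ℝ) * I)) -
      I • ∫ y : ℝ in Ioc (-1) 1, fourierIntegrand φ τ ((1 / 2 : ℝ) + y * I) := by
  rw [hankelTransform, intervalIntegral.integral_of_le (by norm_num), smul_eq_mul]

namespace SlitDecay

variable {φ : ℂ → ℂ} {C y : ℝ}

lemma isLeftContour_horizontal (H : SlitDecay φ C) (hy : |y| = 1) :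
    IsLeftContour φ (volume.restrict (Iic (1 / 2))) fun x => x + y * I where
  continuous := by fun_prop
  integrable := (H.integrable_horizontal hy.ge).restrict
  integrable_mul := (H.integrable_horizontal_mul hy.ge).restrict
  re_le := (ae_restrict_mem measurableSet_Iic).mono fun x hx => by simpa using hx
  abs_im_le := Eventually.of_forall fun x => by simp [hy]

lemma isLeftContour_vertical (H : SlitDecay φ C) :
    IsLeftContour φ (volume.restrict (Ioc (-1) 1)) fun y => (1 / 2 : ℝ) + y * I where
  continuous := by fun_prop
  integrable := ((H.continuous_vertical one_half_pos).integrableOn_Icc).mono_set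
    Ioc_subset_Icc_self
  integrable_mul := (((H.continuous_vertical one_half_pos).mul
    (by fun_prop)).integrableOn_Icc).mono_set Ioc_subset_Icc_self
  re_le := Eventually.of_forall fun y => by simp
  abs_im_le := (ae_restrict_mem measurableSet_Ioc).mono fun y hy => by
    simpa using abs_le.2 ⟨hy.1.le, hy.2⟩

lemma diffContOnCl_hankelTransform (H : SlitDecay φ C) :
    DiffContOnCl ℂ (hankelTransform φ) strip := by
  rw [funext (hankelTransform_eq_setIntegral φ)]
  exact ((H.isLeftContour_horizontal abs_one).diffContOnCl.sub
    (H.isLeftContour_horizontal (by simp)).diffContOnCl).sub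
    (H.isLeftContour_vertical.diffContOnCl.const_smul I)

lemma exists_norm_hankelTransform_le (H : SlitDecay φ C) : ∃ D, ∀ τ ∈ closure strip,
    ‖hankelTransform φ τ‖ ≤ D * Real.exp (2 * π * |τ.re|) := by
  obtain ⟨D₁, h₁⟩ := (H.isLeftContour_horizontal abs_one).exists_norm_integral_le
  obtain ⟨D₂, h₂⟩ := (H.isLeftContour_horizontal (y := -1) (by simp)).exists_norm_integral_le
  obtain ⟨D₃, h₃⟩ := H.isLeftContour_vertical.exists_norm_integral_le
  refine ⟨D₁ + D₂ + D₃, fun τ hτ => ?_⟩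
  rw [hankelTransform_eq_setIntegral, add_mul, add_mul]
  refine (norm_sub_le _ _).trans (add_le_add ((norm_sub_le _ _).trans ?_) ?_)
  · exact add_le_add (h₁ τ hτ) (h₂ τ hτ)
  · simpa [norm_smul] using h₃ τ hτ

/- For `Im z = y` the integral at frequency `t` carries a factor `e^{2πyt}`; at height
`y = 1 + slope A / 2π` this turns the bound `e^{-intercept A}` into `e^{2πt - line A t}`. -/
lemma norm_hankelTransform_ofReal_le (H : SlitDecay φ C) {T : TentFamily} {A : Finset ℕ}
    (hA : ∀ z : ℂ, z.im = 1 + T.slope A / (2 * π) →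
      ‖φ z‖ ≤ C * Real.exp (-T.intercept A) / ‖z‖ ^ 3) {t : ℝ} (ht : 0 ≤ t) :
    ‖hankelTransform φ t‖ ≤ C * π * Real.exp (2 * π * t - T.line A t) := by
  set y : ℝ := 1 + T.slope A / (2 * π) with hy
  have hC := H.nonneg
  have hy1 : 1 ≤ y := le_add_of_nonneg_right (div_nonneg (T.slope_nonneg A) Real.two_pi_pos.le)
  have hy1' : 1 ≤ |y| := hy1.trans (le_abs_self y)
  have hexp : -T.intercept A + 2 * π * (y * t) = 2 * π * t - T.line A t := by
    rw [T.line_eq, hy]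
    field_simp
    ring
  rw [← H.lineIntegral_one_eq_hankelTransform ht,
    H.lineIntegral_fourierIntegrand_eq t (y₂ := y) fun v hv => by
      rw [uIcc_of_le hy1] at hv
      exact hv.1.trans (le_abs_self v)]
  calc ‖lineIntegral (fourierIntegrand φ t) y‖
      ≤ C * Real.exp (-T.intercept A) * π / |y| * Real.exp (2 * π * (y * t)) :=
        norm_lineIntegral_fourierIntegrand_le (by positivity) hy1' hA t
    _ ≤ C * Real.exp (-T.intercept A) * π * Real.exp (2 * π * (y * t)) := by
        gcongr
        exact div_le_self (by positivity) hy1'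
    _ = C * π * Real.exp (2 * π * t - T.line A t) := by
        rw [← hexp, Real.exp_add]
        ring

lemma exists_stripDecay_hankelTransform (H : SlitDecay φ C) {T : TentFamily}
    (hT : ∀ (A : Finset ℕ) (z : ℂ), z.im = 1 + T.slope A / (2 * π) →
      ‖φ z‖ ≤ C * Real.exp (-T.intercept A) / ‖z‖ ^ 3) :
    ∃ D, T.StripDecay (hankelTransform φ) D (2 * π) := by
  obtain ⟨D, hD⟩ := H.exists_norm_hankelTransform_le
  refine ⟨max D (C * π), H.diffContOnCl_hankelTransform, fun τ hτ => (hD τ hτ).trans ?_,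
    fun t ht A => (H.norm_hankelTransform_ofReal_le (hT A) ht.le).trans ?_⟩
  · gcongr
    exact le_max_left _ _
  · gcongr
    exact le_max_right _ _

theorem lineIntegral_one_eq_zero (H : SlitDecay φ C) {T : TentFamily}
    (hT : ∀ (A : Finset ℕ) (z : ℂ), z.im = 1 + T.slope A / (2 * π) →
      ‖φ z‖ ≤ C * Real.exp (-T.intercept A) / ‖z‖ ^ 3) (t : ℝ) :
    lineIntegral (fourierIntegrand φ t) 1 = 0 := by
  rcases le_total 0 t with ht | ht
  · obtain ⟨D, hD⟩ := H.exists_stripDecay_hankelTransform hT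
    rw [H.lineIntegral_one_eq_hankelTransform ht]
    exact hD.eqOn_zero (ofReal_mem_closure_strip t)
  · exact H.lineIntegral_fourierIntegrand_eq_zero (by simp) (by linarith)

theorem eq_zero_on_line (H : SlitDecay φ C) {T : TentFamily}
    (hT : ∀ (A : Finset ℕ) (z : ℂ), z.im = 1 + T.slope A / (2 * π) →
      ‖φ z‖ ≤ C * Real.exp (-T.intercept A) / ‖z‖ ^ 3) (x : ℝ) : φ (x + (1 : ℝ) * I) = 0 := by
  have hfourier : FourierTransform.fourier (fun x : ℝ => φ (x + (1 : ℝ) * I)) = 0 := by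
    ext t
    have hint (x : ℝ) : Complex.exp (↑(-2 * π * x * t) * I) • φ (x + (1 : ℝ) * I) =
        Complex.exp (-2 * π * t) * fourierIntegrand φ t (x + (1 : ℝ) * I) := by
      rw [fourierIntegrand, smul_eq_mul, mul_comm, mul_left_comm, ← Complex.exp_add]
      congr 2
      push_cast
      linear_combination (2 * π * t : ℂ) * Complex.I_sq
    have hline := H.lineIntegral_one_eq_zero hT t
    rw [lineIntegral] at hline
    rw [Real.fourier_real_eq_integral_exp_smul]
    simp only [hint, integral_const_mul, hline, mul_zero, Pi.zero_apply]
  exact congrFun (((H.continuous_horizontal one_ne_zero).ae_eq_iff_eq volume continuous_zero).1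
    (ae_eq_zero_of_fourier_eq_zero (H.integrable_horizontal (by simp)) hfourier)) x

end SlitDecay

/-! ### Blaschke products in a half-plane and in the slit plane -/

section Blaschke

variable {ι : Type*} {a : ι → ℝ} {s : ℂ}

/-- The factor `(a - s) / (a + s)` of a Blaschke product for the right half-plane. -/
def blaschkeFactor (a : ℝ) (s : ℂ) : ℂ := (a - s) / (a + s)

lemma le_norm_ofReal_add {a : ℝ} (hs : 0 < s.re) : a ≤ ‖(a + s : ℂ)‖ := by
  have := Complex.re_le_norm (a + s : ℂ)
  simp only [Complex.add_re, Complex.ofReal_re] at this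
  linarith

lemma ofReal_add_ne_zero {a : ℝ} (ha : 0 < a) (hs : 0 < s.re) : (a + s : ℂ) ≠ 0 :=
  norm_pos_iff.1 (ha.trans_le (le_norm_ofReal_add hs))

lemma differentiableOn_blaschkeFactor {a : ℝ} (ha : 0 < a) :
    DifferentiableOn ℂ (blaschkeFactor a) {s | 0 < s.re} :=
  DifferentiableOn.div (by fun_prop) (by fun_prop) fun _ hs => ofReal_add_ne_zero ha hs

lemma norm_blaschkeFactor_le_one {a : ℝ} (ha : 0 < a) (hs : 0 < s.re) :
    ‖blaschkeFactor a s‖ ≤ 1 := by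
  rw [blaschkeFactor, norm_div]
  refine div_le_one_of_le₀ (le_of_sq_le_sq ?_ (norm_nonneg _)) (norm_nonneg _)
  simp only [Complex.sq_norm, Complex.normSq_apply, Complex.sub_re, Complex.sub_im, Complex.add_re,
    Complex.add_im, Complex.ofReal_re, Complex.ofReal_im]
  nlinarith [mul_pos ha hs]

lemma norm_blaschkeFactor_sub_one_le {a : ℝ} (ha : 0 < a) (hs : 0 < s.re) :
    ‖blaschkeFactor a s - 1‖ ≤ 2 * ‖s‖ * (1 / a) := by
  have hsub : blaschkeFactor a s - 1 = -(2 * s) / (a + s) := by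
    have := ofReal_add_ne_zero ha hs
    rw [blaschkeFactor]
    field_simp
    ring
  rw [hsub, norm_div, norm_neg, norm_mul, Complex.norm_ofNat, div_eq_mul_one_div]
  gcongr
  exact le_norm_ofReal_add hs

/-- The Blaschke product of the right half-plane with zeros `a i`. -/
def blaschkeProduct (a : ι → ℝ) (s : ℂ) : ℂ := ∏' i, blaschkeFactor (a i) s

lemma summable_norm_blaschkeFactor_sub_one (ha : ∀ i, 0 < a i) (hsum : Summable fun i => 1 / a i)
    (hs : 0 < s.re) : Summable fun i => ‖blaschkeFactor (a i) s - 1‖ :=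
  (hsum.mul_left (2 * ‖s‖)).of_nonneg_of_le (fun _ => norm_nonneg _)
    fun i => norm_blaschkeFactor_sub_one_le (ha i) hs

lemma blaschkeProduct_eq_tprod_one_add (a : ι → ℝ) :
    blaschkeProduct a = fun s => ∏' i, (1 + (blaschkeFactor (a i) s - 1)) := by
  funext s
  simp only [blaschkeProduct, add_sub_cancel]

lemma differentiableOn_blaschkeProduct (ha : ∀ i, 0 < a i) (hsum : Summable fun i => 1 / a i) :
    DifferentiableOn ℂ (blaschkeProduct a) {s | 0 < s.re} := by
  intro s hs
  let K : Set ℂ := {s | 0 < s.re} ∩ Metric.ball 0 (‖s‖ + 1)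
  have hK : IsOpen K := (isOpen_lt continuous_const Complex.continuous_re).inter Metric.isOpen_ball
  have hsK : K ∈ 𝓝 s := hK.mem_nhds ⟨hs, by simp⟩
  have hfactor (i : ι) : DifferentiableOn ℂ (fun s => blaschkeFactor (a i) s - 1) K :=
    ((differentiableOn_blaschkeFactor (ha i)).mono inter_subset_left).sub_const 1
  have hprod := Summable.hasProdLocallyUniformlyOn_one_add (K := K) hK
    (hsum.mul_left (2 * (‖s‖ + 1))) (Eventually.of_forall fun i z hz => by
      have hzs : ‖z‖ ≤ ‖s‖ + 1 := (mem_ball_zero_iff.1 hz.2).le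
      have hai := ha i
      exact (norm_blaschkeFactor_sub_one_le hai hz.1).trans (by gcongr))
    fun i => (hfactor i).continuousOn
  rw [blaschkeProduct_eq_tprod_one_add]
  refine DifferentiableAt.differentiableWithinAt (DifferentiableOn.differentiableAt
    (hprod.differentiableOn (Eventually.of_forall fun F => ?_) hK) hsK)
  simpa [Finset.prod_fn] using
    DifferentiableOn.finsetProd fun i (_ : i ∈ F) => (hfactor i).const_add 1

lemma norm_blaschkeProduct_le_one (ha : ∀ i, 0 < a i) (hsum : Summable fun i => 1 / a i)
    (hs : 0 < s.re) : ‖blaschkeProduct a s‖ ≤ 1 := by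
  have hprod := (multipliable_one_add_of_summable
    (summable_norm_blaschkeFactor_sub_one ha hsum hs)).hasProd
  rw [blaschkeProduct_eq_tprod_one_add]
  refine le_of_tendsto hprod.norm (Eventually.of_forall fun F => ?_)
  simp only [add_sub_cancel]
  exact Finset.prod_le_one (fun _ _ => norm_nonneg _)
    fun i _ => norm_blaschkeFactor_le_one (ha i) hs

lemma blaschkeProduct_apply_eq_zero (a : ι → ℝ) (i : ι) : blaschkeProduct a (a i) = 0 :=
  tprod_of_exists_eq_zero ⟨i, by rw [blaschkeFactor, sub_self, zero_div]⟩

lemma blaschkeProduct_ne_zero (ha : ∀ i, 0 < a i) (hsum : Summable fun i => 1 / a i)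
    (hs : 0 < s.re) (hsa : ∀ i, s ≠ a i) : blaschkeProduct a s ≠ 0 := by
  rw [blaschkeProduct_eq_tprod_one_add]
  refine tprod_one_add_ne_zero_of_summable (fun i => ?_)
    (summable_norm_blaschkeFactor_sub_one ha hsum hs)
  rw [add_sub_cancel]
  exact div_ne_zero (sub_ne_zero.2 (hsa i).symm) (ofReal_add_ne_zero (ha i) hs)

end Blaschke

section SlitBlaschke

open Complex (slitPlane)

variable {Γ : Set ℕ} {z : ℂ}

/-- The Blaschke product of the slit plane with zeros `Γ`, obtained from that of the right
half-plane through the square root. -/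
def slitBlaschke (Γ : Set ℕ) (z : ℂ) : ℂ :=
  blaschkeProduct (fun γ : Γ => √(γ : ℝ)) (Complex.sqrt z)

lemma re_sqrt_pos (hz : z ∈ slitPlane) : 0 < (Complex.sqrt z).re := by
  have hre : 0 < ‖z‖ + z.re := by
    rcases hz with hz | hz
    · positivity
    · linarith [neg_abs_le z.re, Complex.abs_re_lt_norm.2 hz]
  rw [Complex.sqrt, Complex.cpow_inv_two_re]
  positivity

open scoped ComplexOrder in
lemma slitBlaschke_natCast_eq_zero {γ : ℕ} (hγ : γ ∈ Γ) : slitBlaschke Γ γ = 0 := by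
  rw [slitBlaschke, Complex.sqrt_of_nonneg (Nat.cast_nonneg γ), Complex.natCast_re]
  exact blaschkeProduct_apply_eq_zero (fun γ : Γ => √(γ : ℝ)) ⟨γ, hγ⟩

lemma sqrt_natCast_pos (hΓ : 0 ∉ Γ) (γ : Γ) : 0 < √(γ : ℝ) :=
  Real.sqrt_pos.2 (Nat.cast_pos.2 (Nat.pos_of_ne_zero fun h => hΓ (h ▸ γ.2)))

lemma differentiableOn_slitBlaschke (hΓ : 0 ∉ Γ) (hsum : Summable fun γ : Γ => 1 / √(γ : ℝ)) :
    DifferentiableOn ℂ (slitBlaschke Γ) slitPlane :=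
  (differentiableOn_blaschkeProduct (sqrt_natCast_pos hΓ) hsum).comp Complex.differentiableOn_sqrt
    fun _ => re_sqrt_pos

lemma norm_slitBlaschke_le_one (hΓ : 0 ∉ Γ) (hsum : Summable fun γ : Γ => 1 / √(γ : ℝ))
    (hz : z ∈ slitPlane) : ‖slitBlaschke Γ z‖ ≤ 1 :=
  norm_blaschkeProduct_le_one (sqrt_natCast_pos hΓ) hsum (re_sqrt_pos hz)

lemma slitBlaschke_ne_zero (hΓ : 0 ∉ Γ) (hsum : Summable fun γ : Γ => 1 / √(γ : ℝ))
    (hz : z.im ≠ 0) : slitBlaschke Γ z ≠ 0 := by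
  refine blaschkeProduct_ne_zero (sqrt_natCast_pos hΓ) hsum (re_sqrt_pos (Or.inr hz))
    fun γ h => hz ?_
  have hsq : Complex.sqrt z ^ 2 = z := Complex.cpow_nat_inv_pow z two_ne_zero
  rw [← hsq, h, ← Complex.ofReal_pow, Complex.ofReal_im]

end SlitBlaschke

/-! ### Uniqueness on the natural numbers for functions of exponential type -/

section Denominator

/-- The denominator `e ^ (2 * π * i * z) - 1`, whose zeros are the integers. -/
def expSubOne (z : ℂ) : ℂ := Complex.exp (2 * π * I * z) - 1

/-- The growth of `e ^ (2 * π * i * t * z)`, uniformly in `t ∈ [0, 1]`. -/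
def bandMajorant (z : ℂ) : ℝ := max 1 (Real.exp (-(2 * π * z.im)))

lemma one_le_bandMajorant (z : ℂ) : 1 ≤ bandMajorant z := le_max_left _ _

lemma continuous_bandMajorant : Continuous bandMajorant := by
  unfold bandMajorant
  fun_prop

lemma norm_cexp_two_pi_I_mul (z : ℂ) :
    ‖Complex.exp (2 * π * I * z)‖ = Real.exp (-(2 * π * z.im)) := by
  rw [Complex.norm_exp]
  congr 1
  simp

lemma hasDerivAt_expSubOne (z : ℂ) :
    HasDerivAt expSubOne (Complex.exp (2 * π * I * z) * (2 * π * I)) z :=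
  (((hasDerivAt_id z).const_mul (2 * π * I : ℂ)).cexp.sub_const 1).congr_deriv
    (by rw [mul_one, id])

lemma deriv_expSubOne_ne_zero (z : ℂ) : deriv expSubOne z ≠ 0 := by
  rw [(hasDerivAt_expSubOne z).deriv]
  exact mul_ne_zero (Complex.exp_ne_zero _) Complex.two_pi_I_ne_zero

lemma expSubOne_eq_zero_iff {z : ℂ} : expSubOne z = 0 ↔ ∃ n : ℤ, z = n := by
  rw [expSubOne, sub_eq_zero, Complex.exp_eq_one_iff]
  refine exists_congr fun n => ?_
  rw [mul_comm (n : ℂ), mul_right_inj' Complex.two_pi_I_ne_zero]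

lemma half_bandMajorant_le_of_one_le_abs_im {z : ℂ} (hz : 1 ≤ |z.im|) :
    bandMajorant z / 2 ≤ ‖expSubOne z‖ := by
  have hπ := Real.pi_gt_three
  have hnorm := norm_cexp_two_pi_I_mul z
  rw [bandMajorant, expSubOne, ← hnorm]
  rcases le_abs.1 hz with h | h
  · have hsmall : ‖Complex.exp (2 * π * I * z)‖ ≤ 1 / 2 := by
      rw [hnorm, Real.exp_neg, one_div]
      exact inv_anti₀ two_pos (by nlinarith [Real.add_one_le_exp (2 * π * z.im)])
    have htri := norm_sub_norm_le 1 (Complex.exp (2 * π * I * z))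
    rw [norm_one, norm_sub_rev] at htri
    rw [max_eq_left (by linarith)]
    linarith
  · have hlarge : 2 ≤ ‖Complex.exp (2 * π * I * z)‖ := by
      rw [hnorm]
      nlinarith [Real.add_one_le_exp (-(2 * π * z.im))]
    have htri := norm_sub_norm_le (Complex.exp (2 * π * I * z)) 1
    rw [norm_one] at htri
    rw [max_eq_right (by linarith)]
    linarith

lemma cexp_two_pi_I_mul_of_re_eq_half {N : ℕ} {z : ℂ} (hz : z.re = N + 1 / 2) :
    Complex.exp (2 * π * I * z) = -(Real.exp (-(2 * π * z.im)) : ℝ) := by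
  have harg : 2 * π * I * z =
      (-(2 * π * z.im) : ℝ) + (N * (2 * π * I) + π * I) := by
    conv_lhs => rw [← Complex.re_add_im z, hz]
    push_cast
    linear_combination (2 * π * z.im : ℂ) * Complex.I_sq
  rw [harg, Complex.exp_add, Complex.exp_add, Complex.exp_nat_mul_two_pi_mul_I,
    Complex.exp_pi_mul_I, Complex.ofReal_exp, one_mul, mul_neg_one]

lemma half_bandMajorant_le_of_re_eq_half {N : ℕ} {z : ℂ} (hz : z.re = N + 1 / 2) :
    bandMajorant z / 2 ≤ ‖expSubOne z‖ := by
  have hexp := Real.exp_pos (-(2 * π * z.im))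
  have hnorm : ‖expSubOne z‖ = Real.exp (-(2 * π * z.im)) + 1 := by
    rw [expSubOne, cexp_two_pi_I_mul_of_re_eq_half hz, ← neg_add', norm_neg,
      ← Complex.ofReal_one, ← Complex.ofReal_add, Complex.norm_of_nonneg (by positivity)]
  rw [hnorm, bandMajorant]
  linarith [max_le_add_of_nonneg zero_le_one hexp.le]

lemma half_bandMajorant_le {z : ℂ} (hz : z ∈ awayFromIntegers) :
    bandMajorant z / 2 ≤ ‖expSubOne z‖ :=
  hz.elim half_bandMajorant_le_of_one_le_abs_im
    fun ⟨_, hN⟩ => half_bandMajorant_le_of_re_eq_half hN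

end Denominator

section SlitQuotient

variable {Γ : Set ℕ} {F : ℂ → ℂ} {J : ℝ} {z : ℂ}

lemma awayFromIntegers_subset_slitPlane : awayFromIntegers ⊆ Complex.slitPlane := by
  rintro z (hz | ⟨N, hz⟩)
  · exact Or.inr (ne_zero_of_one_le_abs hz)
  · exact Or.inl (hz ▸ by positivity)

/-- For `F` vanishing at the positive integers outside `Γ`, the quotient of `F` by a function with
the same zeros and no others in the slit plane; the factor `z ^ 3` makes it integrable along
horizontal lines. -/
def slitQuotient (Γ : Set ℕ) (F : ℂ → ℂ) (z : ℂ) : ℂ :=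
  regularQuotient (fun z => F z * slitBlaschke Γ z) expSubOne z / z ^ 3

lemma mul_slitBlaschke_eq_zero (hF : ∀ n : ℕ, 1 ≤ n → n ∉ Γ → F n = 0)
    (hz : z ∈ Complex.slitPlane) (hE : expSubOne z = 0) : F z * slitBlaschke Γ z = 0 := by
  obtain ⟨n, rfl⟩ := expSubOne_eq_zero_iff.1 hE
  have hn : 0 < n := by simpa [Complex.mem_slitPlane_iff] using hz
  lift n to ℕ using hn.le
  rw [Int.cast_natCast]
  by_cases hnΓ : n ∈ Γ
  · rw [slitBlaschke_natCast_eq_zero hnΓ, mul_zero]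
  · rw [hF n (by omega) hnΓ, zero_mul]

lemma differentiableOn_slitQuotient (hΓ : 0 ∉ Γ) (hsum : Summable fun γ : Γ => 1 / √(γ : ℝ))
    (hFd : Differentiable ℂ F) (hF : ∀ n : ℕ, 1 ≤ n → n ∉ Γ → F n = 0) :
    DifferentiableOn ℂ (slitQuotient Γ F) Complex.slitPlane :=
  (differentiableOn_regularQuotient Complex.isOpen_slitPlane
    (hFd.differentiableOn.mul (differentiableOn_slitBlaschke hΓ hsum))
    (fun z _ => (hasDerivAt_expSubOne z).differentiableAt.differentiableWithinAt)
    (fun _ => mul_slitBlaschke_eq_zero hF) fun z _ _ => deriv_expSubOne_ne_zero z).div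
    (by fun_prop) fun _ hz => pow_ne_zero 3 (Complex.slitPlane_ne_zero hz)

lemma expSubOne_ne_zero (hz : z ∈ awayFromIntegers) : expSubOne z ≠ 0 :=
  norm_pos_iff.1 (by linarith [half_bandMajorant_le hz, one_le_bandMajorant z])

lemma slitQuotient_eq (hz : z ∈ awayFromIntegers) :
    slitQuotient Γ F z = F z * slitBlaschke Γ z / expSubOne z / z ^ 3 := by
  rw [slitQuotient, regularQuotient, if_neg (expSubOne_ne_zero hz)]

lemma norm_slitQuotient_le (hΓ : 0 ∉ Γ) (hsum : Summable fun γ : Γ => 1 / √(γ : ℝ))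
    (hz : z ∈ awayFromIntegers) (hFz : ‖F z‖ ≤ J * bandMajorant z) :
    ‖slitQuotient Γ F z‖ ≤ 2 * J / ‖z‖ ^ 3 := by
  have hmajorant : 0 < bandMajorant z := one_pos.trans_le (one_le_bandMajorant z)
  have hblaschke := norm_slitBlaschke_le_one hΓ hsum (awayFromIntegers_subset_slitPlane hz)
  rw [slitQuotient_eq hz, norm_div, norm_div, norm_pow, norm_mul]
  gcongr
  calc ‖F z‖ * ‖slitBlaschke Γ z‖ / ‖expSubOne z‖
      ≤ ‖F z‖ / (bandMajorant z / 2) :=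
        div_le_div₀ (norm_nonneg _) (mul_le_of_le_one_right (norm_nonneg _) hblaschke)
          (half_pos hmajorant) (half_bandMajorant_le hz)
    _ ≤ 2 * J := by
        rw [div_le_iff₀ (half_pos hmajorant)]
        linarith

lemma eq_zero_of_slitQuotient_eq_zero (hΓ : 0 ∉ Γ)
    (hsum : Summable fun γ : Γ => 1 / √(γ : ℝ)) (hz : 1 ≤ |z.im|)
    (h : slitQuotient Γ F z = 0) : F z = 0 := by
  have hz0 : z ≠ 0 := fun h0 => ne_zero_of_one_le_abs hz (by rw [h0, Complex.zero_im])
  have hne := slitBlaschke_ne_zero hΓ hsum (ne_zero_of_one_le_abs hz)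
  simpa [slitQuotient_eq (Or.inl hz : z ∈ awayFromIntegers), hne,
    expSubOne_ne_zero (Or.inl hz), hz0] using h

theorem eq_zero_on_line_of_natCast_eq_zero (hΓ : 0 ∉ Γ)
    (hsum : Summable fun γ : Γ => 1 / √(γ : ℝ)) (hFd : Differentiable ℂ F)
    (hF : ∀ n : ℕ, 1 ≤ n → n ∉ Γ → F n = 0) (hFJ : ∀ z, ‖F z‖ ≤ J * bandMajorant z)
    {T : TentFamily} (hT : ∀ (A : Finset ℕ) (z : ℂ), z.im = 1 + T.slope A / (2 * π) →
      ‖F z‖ ≤ J * Real.exp (-T.intercept A)) (x : ℝ) : F (x + (1 : ℝ) * I) = 0 := by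
  have H : SlitDecay (slitQuotient Γ F) (2 * J) :=
    ⟨differentiableOn_slitQuotient hΓ hsum hFd hF,
      fun z hz => norm_slitQuotient_le hΓ hsum hz (hFJ z)⟩
  refine eq_zero_of_slitQuotient_eq_zero hΓ hsum (by simp)
    (H.eq_zero_on_line (T := T) (fun A z hz => ?_) x)
  have him : 1 ≤ |z.im| := by
    rw [hz]
    exact le_abs.2 (Or.inl (le_add_of_nonneg_right (div_nonneg (T.slope_nonneg A) (by positivity))))
  have hFz : ‖F z‖ ≤ J * Real.exp (-T.intercept A) * bandMajorant z :=
    (hT A z hz).trans (le_mul_of_one_le_right ((norm_nonneg _).trans (hT A z hz))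
      (one_le_bandMajorant z))
  rw [mul_assoc]
  exact norm_slitQuotient_le hΓ hsum (Or.inl him) hFz

end SlitQuotient

/-! ### Tents below a monotone function -/

section TentsFromWeights

/-- The dyadic points `1/2, 1/4, 1/8, …`. -/
def dyadic (k : ℕ) : ℝ := (1 / 2) ^ (k + 1)

lemma dyadic_pos (k : ℕ) : 0 < dyadic k := by
  unfold dyadic
  positivity

lemma dyadic_antitone : Antitone dyadic := fun _ _ hjk =>
  pow_le_pow_of_le_one (by norm_num) (by norm_num) (by omega)

lemma dyadic_lt_one (k : ℕ) : dyadic k < 1 :=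
  pow_lt_one₀ (by norm_num) (by norm_num) k.succ_ne_zero

lemma dyadic_mem_Ioo (k : ℕ) : dyadic k ∈ Ioo (0 : ℝ) 1 := ⟨dyadic_pos k, dyadic_lt_one k⟩

lemma exists_dyadic_lt_le {t : ℝ} (ht : t ∈ Ioo (0 : ℝ) 1) :
    ∃ n, dyadic n < t ∧ t ≤ 2 * dyadic n := by
  obtain ⟨n, hlt, hle⟩ := exists_nat_pow_near_of_lt_one ht.1 ht.2.le
    (by norm_num : (0 : ℝ) < 1 / 2) (by norm_num)
  exact ⟨n, hlt, hle.trans_eq (by rw [dyadic, pow_succ]; ring)⟩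

variable {ψ : ℝ → ℝ} {t : ℝ}

/-- The increments of `ψ` along the dyadic points, starting from `0`; they are the heights of the
tents that fit below `ψ`. -/
def dyadicIncrement (ψ : ℝ → ℝ) : ℕ → ℝ
  | 0 => ψ (dyadic 0)
  | k + 1 => ψ (dyadic (k + 1)) - ψ (dyadic k)

lemma sum_range_succ_dyadicIncrement (ψ : ℝ → ℝ) (n : ℕ) :
    ∑ k ∈ Finset.range (n + 1), dyadicIncrement ψ k = ψ (dyadic n) := by
  rw [Finset.sum_range_succ', add_comm]
  simp only [dyadicIncrement, Finset.sum_range_sub fun k => ψ (dyadic k), add_sub_cancel]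

lemma dyadicIncrement_nonneg (hψ : ∀ t ∈ Ioo (0 : ℝ) 1, 0 ≤ ψ t)
    (hanti : AntitoneOn ψ (Ioo 0 1)) : ∀ k, 0 ≤ dyadicIncrement ψ k
  | 0 => hψ _ (dyadic_mem_Ioo 0)
  | k + 1 => sub_nonneg.2 (hanti (dyadic_mem_Ioo _) (dyadic_mem_Ioo _) (dyadic_antitone k.le_succ))

lemma sum_range_dyadicIncrement_le (hψ : ∀ t ∈ Ioo (0 : ℝ) 1, 0 ≤ ψ t)
    (hanti : AntitoneOn ψ (Ioo 0 1)) (ht : t ∈ Ioo (0 : ℝ) 1) (n : ℕ) :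
    ∑ k ∈ Finset.range n, (if t < dyadic k then dyadicIncrement ψ k else 0) ≤ ψ t := by
  induction n with
  | zero => simpa using hψ t ht
  | succ n ih =>
    by_cases h : t < dyadic n
    · calc ∑ k ∈ Finset.range (n + 1), (if t < dyadic k then dyadicIncrement ψ k else 0)
          = ∑ k ∈ Finset.range (n + 1), dyadicIncrement ψ k := by
            refine Finset.sum_congr rfl fun k hk => if_pos (h.trans_le (dyadic_antitone ?_))
            exact Finset.mem_range_succ_iff.1 hk
        _ = ψ (dyadic n) := sum_range_succ_dyadicIncrement ψ n
        _ ≤ ψ t := hanti ht (dyadic_mem_Ioo n) h.le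
    · rwa [Finset.sum_range_succ, if_neg h, add_zero]

lemma sum_dyadicIncrement_mul_le (hψ : ∀ t ∈ Ioo (0 : ℝ) 1, 0 ≤ ψ t)
    (hanti : AntitoneOn ψ (Ioo 0 1)) (ht : t ∈ Ioo (0 : ℝ) 1) (A : Finset ℕ) :
    ∑ k ∈ A, dyadicIncrement ψ k * (1 - t / dyadic k) ≤ ψ t := by
  have hinc := dyadicIncrement_nonneg hψ hanti
  have hterm (k : ℕ) : dyadicIncrement ψ k * (1 - t / dyadic k) ≤
      if t < dyadic k then dyadicIncrement ψ k else 0 := by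
    split_ifs with h
    · exact mul_le_of_le_one_right (hinc k)
        (sub_le_self _ (div_nonneg ht.1.le (dyadic_pos k).le))
    · exact mul_nonpos_of_nonneg_of_nonpos (hinc k)
        (sub_nonpos.2 ((one_le_div (dyadic_pos k)).2 (not_lt.1 h)))
  obtain ⟨n, hn⟩ := A.exists_nat_subset_range
  calc ∑ k ∈ A, dyadicIncrement ψ k * (1 - t / dyadic k)
      ≤ ∑ k ∈ A, (if t < dyadic k then dyadicIncrement ψ k else 0) :=
        Finset.sum_le_sum fun k _ => hterm k
    _ ≤ ∑ k ∈ Finset.range n, (if t < dyadic k then dyadicIncrement ψ k else 0) :=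
        Finset.sum_le_sum_of_subset_of_nonneg hn fun k _ _ => by
          split_ifs
          exacts [hinc k, le_rfl]
    _ ≤ ψ t := sum_range_dyadicIncrement_le hψ hanti ht n

lemma ofReal_le_tsum_indicator (hψ : ∀ t ∈ Ioo (0 : ℝ) 1, 0 ≤ ψ t)
    (hanti : AntitoneOn ψ (Ioo 0 1)) (ht : t ∈ Ioo (0 : ℝ) 1) :
    ENNReal.ofReal (ψ t) ≤ ∑' k, ENNReal.ofReal (dyadicIncrement ψ k) *
      (Iic (2 * dyadic k)).indicator 1 t := by
  obtain ⟨n, hlt, hle⟩ := exists_dyadic_lt_le ht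
  calc ENNReal.ofReal (ψ t)
      ≤ ENNReal.ofReal (∑ k ∈ Finset.range (n + 1), dyadicIncrement ψ k) := by
        rw [sum_range_succ_dyadicIncrement]
        exact ENNReal.ofReal_le_ofReal (hanti (dyadic_mem_Ioo n) ht hlt.le)
    _ = ∑ k ∈ Finset.range (n + 1), ENNReal.ofReal (dyadicIncrement ψ k) *
          (Iic (2 * dyadic k)).indicator 1 t := by
        rw [ENNReal.ofReal_sum_of_nonneg fun k _ => dyadicIncrement_nonneg hψ hanti k]
        refine Finset.sum_congr rfl fun k hk => ?_
        have hnk := dyadic_antitone (Finset.mem_range_succ_iff.1 hk)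
        have htk : t ∈ Iic (2 * dyadic k) := hle.trans (by linarith)
        rw [indicator_of_mem htk, Pi.one_apply, mul_one]
    _ ≤ _ := ENNReal.sum_le_tsum _

lemma lintegral_ofReal_le_tsum (hψ : ∀ t ∈ Ioo (0 : ℝ) 1, 0 ≤ ψ t)
    (hanti : AntitoneOn ψ (Ioo 0 1)) : ∫⁻ t in Ioo (0 : ℝ) 1, ENNReal.ofReal (ψ t) ≤
      ∑' k, ENNReal.ofReal (2 * (dyadicIncrement ψ k * dyadic k)) := by
  have hmeas (k : ℕ) : Measurable ((Iic (2 * dyadic k)).indicator (1 : ℝ → ENNReal)) :=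
    measurable_one.indicator measurableSet_Iic
  have hvol (k : ℕ) : ∫⁻ t in Ioo (0 : ℝ) 1, (Iic (2 * dyadic k)).indicator 1 t ≤
      ENNReal.ofReal (2 * dyadic k) := by
    rw [lintegral_indicator_one measurableSet_Iic, Measure.restrict_apply measurableSet_Iic]
    calc volume (Iic (2 * dyadic k) ∩ Ioo 0 1) ≤ volume (Ioc 0 (2 * dyadic k)) :=
          measure_mono fun x hx => ⟨hx.2.1, hx.1⟩
      _ = ENNReal.ofReal (2 * dyadic k) := by rw [Real.volume_Ioc, sub_zero]
  calc ∫⁻ t in Ioo (0 : ℝ) 1, ENNReal.ofReal (ψ t)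
      ≤ ∫⁻ t in Ioo (0 : ℝ) 1, ∑' k, ENNReal.ofReal (dyadicIncrement ψ k) *
          (Iic (2 * dyadic k)).indicator 1 t :=
        setLIntegral_mono' measurableSet_Ioo fun t => ofReal_le_tsum_indicator hψ hanti
    _ = ∑' k, ENNReal.ofReal (dyadicIncrement ψ k) *
          ∫⁻ t in Ioo (0 : ℝ) 1, (Iic (2 * dyadic k)).indicator 1 t := by
        rw [lintegral_tsum fun k => ((hmeas k).const_mul _).aemeasurable]
        exact tsum_congr fun k => lintegral_const_mul _ (hmeas k)
    _ ≤ ∑' k, ENNReal.ofReal (2 * (dyadicIncrement ψ k * dyadic k)) := by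
        refine ENNReal.tsum_le_tsum fun k => ?_
        rw [mul_left_comm, ENNReal.ofReal_mul (dyadicIncrement_nonneg hψ hanti k)]
        gcongr
        exact hvol k

lemma not_summable_dyadicIncrement_mul (hψ : ∀ t ∈ Ioo (0 : ℝ) 1, 0 ≤ ψ t)
    (hanti : AntitoneOn ψ (Ioo 0 1)) (hint : ∫⁻ t in Ioo (0 : ℝ) 1, ENNReal.ofReal (ψ t) = ⊤) :
    ¬ Summable fun k => dyadicIncrement ψ k * dyadic k := by
  intro hsum
  have hle := lintegral_ofReal_le_tsum hψ hanti
  rw [hint, ← ENNReal.ofReal_tsum_of_nonneg (fun k => mul_nonneg zero_le_two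
    (mul_nonneg (dyadicIncrement_nonneg hψ hanti k) (dyadic_pos k).le)) (hsum.mul_left 2)] at hle
  exact ENNReal.ofReal_ne_top (top_le_iff.1 hle)

theorem exists_tentFamily_line_le (hψ : ∀ t ∈ Ioo (0 : ℝ) 1, 0 ≤ ψ t)
    (hanti : AntitoneOn ψ (Ioo 0 1)) (hint : ∫⁻ t in Ioo (0 : ℝ) 1, ENNReal.ofReal (ψ t) = ⊤) :
    ∃ T : TentFamily, ∀ A, ∀ t ∈ Ioo (0 : ℝ) 1, T.line A t ≤ ψ t :=
  ⟨{  height := dyadicIncrement ψ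
      width := dyadic
      height_nonneg := dyadicIncrement_nonneg hψ hanti
      width_pos := dyadic_pos
      width_le_one := fun k => (dyadic_lt_one k).le
      not_summable_area := not_summable_dyadicIncrement_mul hψ hanti hint },
    fun A _ ht => sum_dyadicIncrement_mul_le hψ hanti ht A⟩

theorem ConditionA.exists_tentFamily {w : ℝ → ℝ} (hw : ConditionA w) :
    ∃ (K : ℝ) (T : TentFamily), ∀ A, ∀ t ∈ Ioo (0 : ℝ) 1,
      √(w t) ≤ K * Real.exp (-T.line A t) := by
  obtain ⟨hpos, hmono, ⟨M, hM⟩, hlog⟩ := hw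
  have hwM (t : ℝ) (ht : t ∈ Ioo (0 : ℝ) 1) : w t ≤ max 1 M :=
    (hM (mem_image_of_mem w ht)).trans (le_max_right _ _)
  have hlogM : 0 ≤ Real.log (max 1 M) := Real.log_nonneg (le_max_left _ _)
  let ψ (t : ℝ) : ℝ := (Real.log (max 1 M) - Real.log (w t)) / 2
  have hψ (t : ℝ) (ht : t ∈ Ioo (0 : ℝ) 1) : 0 ≤ ψ t :=
    div_nonneg (sub_nonneg.2 (Real.log_le_log (hpos t ht) (hwM t ht))) zero_le_two
  have hanti : AntitoneOn ψ (Ioo 0 1) := fun s hs t ht hst =>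
    div_le_div_of_nonneg_right (sub_le_sub_left (Real.log_le_log (hpos s hs) (hmono hs ht hst)) _)
      zero_le_two
  have hint : ∫⁻ t in Ioo (0 : ℝ) 1, ENNReal.ofReal (ψ t) = ⊤ := by
    have hle : ∫⁻ t in Ioo (0 : ℝ) 1, ENNReal.ofReal (-Real.log (w t)) ≤
        2 * ∫⁻ t in Ioo (0 : ℝ) 1, ENNReal.ofReal (ψ t) := by
      rw [← lintegral_const_mul' _ _ ENNReal.ofNat_ne_top]
      refine lintegral_mono fun t => ?_
      rw [← ENNReal.ofReal_ofNat, ← ENNReal.ofReal_mul zero_le_two]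
      exact ENNReal.ofReal_le_ofReal (by simp only [ψ]; linarith)
    rw [hlog.2, top_le_iff] at hle
    exact (ENNReal.mul_eq_top.1 hle).elim And.right fun h => absurd h.1 ENNReal.ofNat_ne_top
  obtain ⟨T, hT⟩ := exists_tentFamily_line_le hψ hanti hint
  refine ⟨Real.exp (Real.log (max 1 M) / 2), T, fun A t ht => ?_⟩
  have hline : T.line A t ≤ (Real.log (max 1 M) - Real.log (w t)) / 2 := hT A t ht
  rw [← Real.exp_log (hpos t ht), ← Real.exp_half, ← Real.exp_add, Real.exp_le_exp]
  linarith

end TentsFromWeights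

/-! ### The Fourier–Laplace transform -/

section BandTransform

variable {g : ℝ → ℂ} {ρ : ℝ → ℝ} {t : ℝ} {z : ℂ}

/-- The Fourier–Laplace transform of a function on the unit interval; it interpolates the Fourier
coefficients `∫ t in 0..1, g t * e ^ (2 * π * i * n * t)`. -/
def bandTransform (g : ℝ → ℂ) (z : ℂ) : ℂ :=
  ∫ t in Ioo (0 : ℝ) 1, g t * Complex.exp (2 * π * I * t * z)

lemma norm_cexp_two_pi_I_mul_ofReal_mul (t : ℝ) (z : ℂ) :
    ‖Complex.exp (2 * π * I * t * z)‖ = Real.exp (-(2 * π * z.im * t)) := by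
  rw [mul_assoc, norm_cexp_two_pi_I_mul, Complex.im_ofReal_mul, mul_left_comm, mul_comm t]

lemma norm_cexp_le_bandMajorant (ht : t ∈ Ioo (0 : ℝ) 1) (z : ℂ) :
    ‖Complex.exp (2 * π * I * t * z)‖ ≤ bandMajorant z := by
  rw [norm_cexp_two_pi_I_mul_ofReal_mul, bandMajorant]
  rcases le_total 0 (2 * π * z.im) with h | h
  · exact le_max_of_le_left (Real.exp_le_one_iff.2 (neg_nonpos.2 (mul_nonneg h ht.1.le)))
  · exact le_max_of_le_right (Real.exp_le_exp.2 (by nlinarith [ht.2]))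

lemma ae_norm_cexp_le_bandMajorant : ∀ᵐ t : ℝ ∂volume.restrict (Ioo 0 1),
    ∀ z ∈ (univ : Set ℂ), ‖Complex.exp (2 * π * I * t * z)‖ ≤ bandMajorant z := by
  filter_upwards [ae_restrict_mem measurableSet_Ioo] with t ht z _
  exact norm_cexp_le_bandMajorant ht z

lemma norm_bandTransform_le (hg : IntegrableOn g (Ioo 0 1)) (z : ℂ) :
    ‖bandTransform g z‖ ≤ (∫ t in Ioo (0 : ℝ) 1, ‖g t‖) * bandMajorant z :=
  norm_integral_mul_cexp_le hg ae_norm_cexp_le_bandMajorant (mem_univ z)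

lemma differentiable_bandTransform (hg : IntegrableOn g (Ioo 0 1)) :
    Differentiable ℂ (bandTransform g) := by
  have hfreq : IntegrableOn (fun t => g t * (2 * π * I * t)) (Ioo 0 1) := by
    refine Integrable.mul_bdd (c := 2 * π) hg (by fun_prop) ?_
    filter_upwards [ae_restrict_mem measurableSet_Ioo] with t ht
    simpa [abs_of_pos Real.pi_pos, abs_of_pos ht.1] using
      mul_le_of_le_one_right Real.two_pi_pos.le ht.2.le
  exact differentiableOn_univ.1 (differentiableOn_integral_mul_cexp hg hfreq (by fun_prop)
    isOpen_univ continuous_bandMajorant ae_norm_cexp_le_bandMajorant)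

lemma norm_bandTransform_le_mul_exp {a s : ℝ} (hρ : IntegrableOn ρ (Ioo 0 1))
    (hgρ : ∀ t ∈ Ioo (0 : ℝ) 1, ‖g t‖ ≤ ρ t * Real.exp (-(a - s * t))) (hz : s ≤ 2 * π * z.im) :
    ‖bandTransform g z‖ ≤ (∫ t in Ioo (0 : ℝ) 1, ρ t) * Real.exp (-a) := by
  rw [← integral_mul_const]
  refine norm_integral_le_of_norm_le (hρ.mul_const _) ?_
  filter_upwards [ae_restrict_mem measurableSet_Ioo] with t ht
  have hρt : 0 ≤ ρ t :=
    nonneg_of_mul_nonneg_left ((norm_nonneg _).trans (hgρ t ht)) (Real.exp_pos _)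
  rw [norm_mul, norm_cexp_two_pi_I_mul_ofReal_mul]
  calc ‖g t‖ * Real.exp (-(2 * π * z.im * t))
      ≤ ρ t * Real.exp (-(a - s * t)) * Real.exp (-(2 * π * z.im * t)) := by
        gcongr
        exact hgρ t ht
    _ = ρ t * Real.exp (-a - (2 * π * z.im - s) * t) := by
        rw [mul_assoc, ← Real.exp_add]
        ring_nf
    _ ≤ ρ t * Real.exp (-a) := by
        gcongr
        exact sub_le_self _ (mul_nonneg (sub_nonneg.2 hz) ht.1.le)

lemma ae_eq_zero_of_bandTransform_eq_zero (hg : IntegrableOn g (Ioo 0 1)) {y : ℝ}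
    (h : ∀ x : ℝ, bandTransform g (x + y * I) = 0) : g =ᵐ[volume.restrict (Ioo 0 1)] 0 := by
  let v (t : ℝ) : ℂ := g t * Complex.exp (2 * π * I * t * (y * I))
  have hv : IntegrableOn v (Ioo 0 1) :=
    integrable_mul_cexp hg (by fun_prop) ae_norm_cexp_le_bandMajorant (mem_univ _)
  have hfourier : FourierTransform.fourier ((Ioo 0 1).indicator v) = 0 := by
    ext ξ
    have hphase (t : ℝ) : Complex.exp (↑(-2 * π * t * ξ) * I) • (Ioo 0 1).indicator v t =
        (Ioo 0 1).indicator
          (fun t : ℝ => g t * Complex.exp (2 * π * I * t * ((-ξ : ℝ) + y * I))) t := by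
      by_cases ht : t ∈ Ioo (0 : ℝ) 1
      · rw [indicator_of_mem ht, indicator_of_mem ht, smul_eq_mul, mul_left_comm,
          ← Complex.exp_add]
        congr 2
        push_cast
        ring
      · rw [indicator_of_notMem ht, indicator_of_notMem ht, smul_zero]
    rw [Real.fourier_real_eq_integral_exp_smul]
    simp only [hphase, integral_indicator measurableSet_Ioo]
    exact h (-ξ)
  have hzero := ae_eq_zero_of_fourier_eq_zero (hv.integrable_indicator measurableSet_Ioo) hfourier
  filter_upwards [ae_restrict_mem measurableSet_Ioo, ae_restrict_of_ae hzero] with t ht hvt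
  rw [indicator_of_mem ht] at hvt
  exact (mul_eq_zero.1 hvt).resolve_right (Complex.exp_ne_zero _)

theorem ae_eq_zero_of_bandTransform_natCast_eq_zero {Γ : Set ℕ} (hΓ : 0 ∉ Γ)
    (hsum : Summable fun γ : Γ => 1 / √(γ : ℝ)) {T : TentFamily}
    (hg : AEStronglyMeasurable g (volume.restrict (Ioo 0 1))) (hρ : IntegrableOn ρ (Ioo 0 1))
    (hgρ : ∀ A, ∀ t ∈ Ioo (0 : ℝ) 1, ‖g t‖ ≤ ρ t * Real.exp (-T.line A t))
    (hzero : ∀ n : ℕ, 1 ≤ n → n ∉ Γ → bandTransform g n = 0) :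
    g =ᵐ[volume.restrict (Ioo 0 1)] 0 := by
  have hle : ∀ t ∈ Ioo (0 : ℝ) 1, ‖g t‖ ≤ ρ t := fun t ht => by
    simpa [TentFamily.line] using hgρ ∅ t ht
  have hgi : IntegrableOn g (Ioo 0 1) :=
    Integrable.mono' hρ hg ((ae_restrict_mem measurableSet_Ioo).mono hle)
  refine ae_eq_zero_of_bandTransform_eq_zero hgi (eq_zero_on_line_of_natCast_eq_zero
    (J := ∫ t in Ioo (0 : ℝ) 1, ρ t) (T := T) hΓ hsum (differentiable_bandTransform hgi) hzero
    (fun z => (norm_bandTransform_le hgi z).trans ?_)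
    fun A z hz => norm_bandTransform_le_mul_exp (s := T.slope A) hρ (fun t ht => ?_) ?_)
  · exact mul_le_mul_of_nonneg_right (setIntegral_mono_on hgi.norm hρ measurableSet_Ioo hle)
      (zero_le_one.trans (one_le_bandMajorant z))
  · rw [← T.line_eq]
    exact hgρ A t ht
  · rw [hz, mul_add, mul_div_cancel₀ _ Real.two_pi_pos.ne']
    linarith [Real.two_pi_pos]

end BandTransform

/-! ### Orthogonality in the weighted space -/

section WeightedSpace

open scoped ComplexConjugate

variable {w : ℝ → ℝ}

lemma memLp_expf [IsFiniteMeasure (wMeasure w)] (l : ℝ) : MemLp (expf l) 2 (wMeasure w) := by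
  have hcont : Continuous (expf l) := by
    unfold expf
    fun_prop
  refine MemLp.of_bound hcont.aestronglyMeasurable 1 (Eventually.of_forall fun t => ?_)
  rw [expf, Complex.norm_exp]
  simp

theorem expSpans_of_forall_eq_zero [IsFiniteMeasure (wMeasure w)] {S : Set ℝ}
    (h : ∀ f : Lp ℂ 2 (wMeasure w),
      (∀ l ∈ S, ∫ t, conj (f t) * expf l t ∂wMeasure w = 0) → f = 0) : ExpSpans w S := by
  rw [ExpSpans, ← Submodule.topologicalClosure_coe, ← Submodule.top_coe (R := ℂ),
    SetLike.coe_set_eq, Submodule.topologicalClosure_eq_top_iff, Submodule.eq_bot_iff]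
  refine fun f hf => h f fun l hl => ?_
  have horth := (Submodule.mem_orthogonal' _ _).1 hf ((memLp_expf l).toLp _)
    (Submodule.subset_span ⟨l, hl, (memLp_expf l).coeFn_toLp⟩)
  rw [L2.inner_def] at horth
  rw [← horth]
  refine integral_congr_ae ?_
  filter_upwards [(memLp_expf (w := w) l).coeFn_toLp] with t ht
  rw [ht, RCLike.inner_apply, mul_comm]

namespace ConditionA

lemma aemeasurable (hw : ConditionA w) : AEMeasurable w (volume.restrict (Ioo 0 1)) :=
  aemeasurable_restrict_of_monotoneOn measurableSet_Ioo hw.2.1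

lemma isFiniteMeasure_wMeasure (hw : ConditionA w) : IsFiniteMeasure (wMeasure w) := by
  obtain ⟨M, hM⟩ := hw.2.2.1
  refine isFiniteMeasure_withDensity_ofReal (Integrable.mono' (integrable_const M)
    hw.aemeasurable.aestronglyMeasurable ?_).2
  filter_upwards [ae_restrict_mem measurableSet_Ioo] with t ht
  rw [Real.norm_of_nonneg (hw.1 t ht).le]
  exact hM (mem_image_of_mem w ht)

lemma integral_wMeasure (hw : ConditionA w) (h : ℝ → ℂ) :
    ∫ t, h t ∂wMeasure w = ∫ t in Ioo (0 : ℝ) 1, w t * h t := by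
  rw [wMeasure, integral_withDensity_eq_integral_toReal_smul₀ hw.aemeasurable.ennreal_ofReal
    (Eventually.of_forall fun _ => ENNReal.ofReal_lt_top)]
  refine setIntegral_congr_fun measurableSet_Ioo fun t ht => ?_
  rw [ENNReal.toReal_ofReal (hw.1 t ht).le, Complex.real_smul]

lemma integral_conj_mul_expf_eq_bandTransform (hw : ConditionA w) (f : ℝ → ℂ) (l : ℝ) :
    ∫ t, conj (f t) * expf l t ∂wMeasure w = bandTransform (fun t => conj (f t) * w t) l := by
  rw [hw.integral_wMeasure, bandTransform]
  congr 1 with t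
  rw [expf, mul_right_comm _ (t : ℂ)]
  ring

lemma integrableOn_norm_mul_sqrt (hw : ConditionA w) (f : Lp ℂ 2 (wMeasure w)) :
    IntegrableOn (fun t => ‖f t‖ * √(w t)) (Ioo 0 1) := by
  have hmeas : AEStronglyMeasurable (fun t => ‖f t‖ * √(w t)) (volume.restrict (Ioo 0 1)) :=
    (Lp.stronglyMeasurable f).norm.aestronglyMeasurable.mul
      hw.aemeasurable.sqrt.aestronglyMeasurable
  have hsq : IntegrableOn (fun t => (‖f t‖ * √(w t)) ^ 2) (Ioo 0 1) := by
    have hf := (memLp_two_iff_integrable_sq_norm (Lp.aestronglyMeasurable f)).1 (Lp.memLp f)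
    refine IntegrableOn.congr_fun ((integrable_withDensity_iff_integrable_smul₀'
      hw.aemeasurable.ennreal_ofReal (Eventually.of_forall fun _ => ENNReal.ofReal_lt_top)).1 hf)
      (fun t ht => ?_) measurableSet_Ioo
    rw [ENNReal.toReal_ofReal (hw.1 t ht).le, smul_eq_mul, mul_pow, Real.sq_sqrt (hw.1 t ht).le,
      mul_comm]
  exact ((memLp_two_iff_integrable_sq hmeas).2 hsq).integrable one_le_two

lemma norm_conj_mul_le (hw : ConditionA w) {K x t : ℝ} (ht : t ∈ Ioo (0 : ℝ) 1)
    (hK : √(w t) ≤ K * x) (z : ℂ) : ‖conj z * w t‖ ≤ K * (‖z‖ * √(w t)) * x := by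
  calc ‖conj z * w t‖ = ‖z‖ * √(w t) * √(w t) := by
        rw [norm_mul, RCLike.norm_conj, Complex.norm_of_nonneg (hw.1 t ht).le, mul_assoc,
          Real.mul_self_sqrt (hw.1 t ht).le]
    _ ≤ ‖z‖ * √(w t) * (K * x) := by gcongr
    _ = K * (‖z‖ * √(w t)) * x := by ring

lemma aestronglyMeasurable_conj_mul (hw : ConditionA w) (f : Lp ℂ 2 (wMeasure w)) :
    AEStronglyMeasurable (fun t => conj (f t) * (w t : ℂ)) (volume.restrict (Ioo 0 1)) :=
  (Complex.continuous_conj.comp_stronglyMeasurable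
    (Lp.stronglyMeasurable f)).aestronglyMeasurable.mul
    (Complex.continuous_ofReal.comp_aestronglyMeasurable hw.aemeasurable.aestronglyMeasurable)

lemma eq_zero_of_conj_mul_ae_eq_zero (hw : ConditionA w) (f : Lp ℂ 2 (wMeasure w))
    (h : (fun t => conj (f t) * (w t : ℂ)) =ᵐ[volume.restrict (Ioo 0 1)] 0) : f = 0 := by
  refine (Lp.eq_zero_iff_ae_eq_zero).2 ((withDensity_absolutelyContinuous _ _).ae_le ?_)
  filter_upwards [ae_restrict_mem measurableSet_Ioo, h] with t ht hft
  simpa [(hw.1 t ht).ne'] using hft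

end ConditionA

end WeightedSpace

/-- **Theorem 1.** If `Γ ⊆ ℕ = {1,2,…}` satisfies `∑_{γ∈Γ} 1/√γ < ∞`, then the system
`E(ℕ∖Γ)` spans `L²(𝕋,w)` for every weight `w` satisfying condition (A). -/
theorem szego_kolmogorov_removal (Γ : Set ℕ) (hΓ0 : 0 ∉ Γ)
    (hsum : Summable fun γ : Γ => 1 / Real.sqrt (γ : ℝ)) :
    ∀ w : ℝ → ℝ, ConditionA w →
      ExpSpans w {x : ℝ | ∃ n : ℕ, 1 ≤ n ∧ n ∉ Γ ∧ x = n} := by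
  intro w hw
  have := hw.isFiniteMeasure_wMeasure
  obtain ⟨K, T, hT⟩ := hw.exists_tentFamily
  refine expSpans_of_forall_eq_zero fun f hf => hw.eq_zero_of_conj_mul_ae_eq_zero f ?_
  refine ae_eq_zero_of_bandTransform_natCast_eq_zero hΓ0 hsum
    (hw.aestronglyMeasurable_conj_mul f) ((hw.integrableOn_norm_mul_sqrt f).const_mul K)
    (fun A t ht => hw.norm_conj_mul_le ht (hT A t ht) (f t)) fun n hn hnΓ => ?_
  rw [← Complex.ofReal_natCast, ← hw.integral_conj_mul_expf_eq_bandTransform f n]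
  exact hf n ⟨n, hn, hnΓ, rfl⟩
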